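/- arXiv:1703.09506 — 2 statements merged into one kernel-verified Lean document; each statement's English description precedes it below -/
import Mathlib

section
/- Let k be a field of characteristic p > 0, I an infinitesimal group scheme over k, and X a scheme of finite type over k equipped with an I-action. Then (i) there exists a categorical quotient φ : X → X/I, where X/I is a scheme of finite type over k and φ is finite, surjective, and radicial; and (ii) for any integer n ≥ h(I) (the height of I), the n-th relative Frobenius morphism F^n_{X/k} : X → X^{(p^n)} factors uniquely as ψ ∘ φ where ψ : X/I → X^{(p^n)}, and ψ is also finite, surjective, and radicial. -/
open AlgebraicGeometry CategoryTheory CategoryTheory.Limits Opposite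

universe u

noncomputable section

/-- The spectrum of the field `k`, the base of all schemes considered. -/
abbrev Spk (k : Type u) [Field k] : Scheme.{u} := Spec (CommRingCat.of k)

/-- A scheme over the field `k`: a scheme together with a structure morphism to `Spec k`. -/
structure SchemeOver (k : Type u) [Field k] : Type (u + 1) where
  carrier : Scheme.{u}
  str : carrier ⟶ Spk k

variable (k : Type u) [Field k]

/-- A group scheme over `k`, presented via its functor of points: for every scheme `T`
and every pair of `T`-points lying over the same `T`-point of `Spec k`, a product point,
together with unit and inverse, satisfying the group axioms functorially. -/
structure GroupSchemeOver extends SchemeOver k where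
  mul : ∀ {T : Scheme.{u}} (a b : T ⟶ carrier), a ≫ str = b ≫ str → (T ⟶ carrier)
  one : Spk k ⟶ carrier
  inv : ∀ {T : Scheme.{u}}, (T ⟶ carrier) → (T ⟶ carrier)
  mul_str : ∀ {T : Scheme.{u}} (a b : T ⟶ carrier) (h), mul a b h ≫ str = a ≫ str
  one_str : one ≫ str = 𝟙 (Spk k)
  inv_str : ∀ {T : Scheme.{u}} (a : T ⟶ carrier), inv a ≫ str = a ≫ str
  mul_natural : ∀ {T' T : Scheme.{u}} (g : T' ⟶ T) (a b : T ⟶ carrier) (h h'),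
    g ≫ mul a b h = mul (g ≫ a) (g ≫ b) h'
  inv_natural : ∀ {T' T : Scheme.{u}} (g : T' ⟶ T) (a : T ⟶ carrier),
    g ≫ inv a = inv (g ≫ a)
  mul_assoc : ∀ {T : Scheme.{u}} (a b c : T ⟶ carrier) (h₁ h₂ h₃ h₄),
    mul (mul a b h₁) c h₂ = mul a (mul b c h₃) h₄
  one_mul : ∀ {T : Scheme.{u}} (a : T ⟶ carrier) (h), mul (a ≫ str ≫ one) a h = a
  mul_one : ∀ {T : Scheme.{u}} (a : T ⟶ carrier) (h), mul a (a ≫ str ≫ one) h = a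
  inv_mul : ∀ {T : Scheme.{u}} (a : T ⟶ carrier) (h), mul (inv a) a h = a ≫ str ≫ one

variable {k}

theorem GroupSchemeOver.mul_congr (G : GroupSchemeOver k) {T : Scheme.{u}}
    {a a' b b' : T ⟶ G.carrier} (ha : a = a') (hb : b = b') (h h') :
    G.mul a b h = G.mul a' b' h' := by subst ha; subst hb; rfl

/-- A homomorphism of group schemes over `k`. -/
structure GroupHom (G H : GroupSchemeOver k) where
  hom : G.carrier ⟶ H.carrier
  hom_str : hom ≫ H.str = G.str
  hom_one : G.one ≫ hom = H.one
  hom_mul : ∀ {T : Scheme.{u}} (a b : T ⟶ G.carrier) (h h'),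
    G.mul a b h ≫ hom = H.mul (a ≫ hom) (b ≫ hom) h'

/-- An action of a group scheme `G` over `k` on a scheme `X` over `k`, presented via
its functor of points. -/
structure ActionOver (G : GroupSchemeOver k) (X : SchemeOver k) where
  act : ∀ {T : Scheme.{u}} (g : T ⟶ G.carrier) (x : T ⟶ X.carrier),
    g ≫ G.str = x ≫ X.str → (T ⟶ X.carrier)
  act_str : ∀ {T : Scheme.{u}} (g : T ⟶ G.carrier) (x : T ⟶ X.carrier) (h),
    act g x h ≫ X.str = x ≫ X.str
  act_natural : ∀ {T' T : Scheme.{u}} (f : T' ⟶ T) (g : T ⟶ G.carrier)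
    (x : T ⟶ X.carrier) (h h'), f ≫ act g x h = act (f ≫ g) (f ≫ x) h'
  one_act : ∀ {T : Scheme.{u}} (x : T ⟶ X.carrier) (h), act (x ≫ X.str ≫ G.one) x h = x
  mul_act : ∀ {T : Scheme.{u}} (g g' : T ⟶ G.carrier) (x : T ⟶ X.carrier) (h₁ h₂ h₃ h₄),
    act (G.mul g g' h₁) x h₂ = act g (act g' x h₃) h₄

theorem ActionOver.act_congr {G : GroupSchemeOver k} {X : SchemeOver k}
    (α : ActionOver G X) {T : Scheme.{u}} {g g' : T ⟶ G.carrier} {x x' : T ⟶ X.carrier}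
    (hg : g = g') (hx : x = x') (h h') : α.act g x h = α.act g' x' h' := by
  subst hg; subst hx; rfl

/-- The action of a group scheme on itself by left translations. -/
def GroupSchemeOver.selfAction (G : GroupSchemeOver k) : ActionOver G G.toSchemeOver where
  act g x h := G.mul g x h
  act_str g x h := (G.mul_str g x h).trans h
  act_natural f g x h h' := G.mul_natural f g x h h'
  one_act x h := G.one_mul x h
  mul_act g g' x h₁ h₂ h₃ h₄ := G.mul_assoc g g' x h₁ h₂ h₃ h₄

/-- Restriction of an action along a homomorphism of group schemes. -/
def ActionOver.res {G H : GroupSchemeOver k} {X : SchemeOver k} (φ : GroupHom H G)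
    (α : ActionOver G X) : ActionOver H X where
  act g x h := α.act (g ≫ φ.hom) x (by rw [Category.assoc, φ.hom_str, h])
  act_str g x h := α.act_str _ _ _
  act_natural f g x h h' := by
    refine (α.act_natural f (g ≫ φ.hom) x _ ?_).trans (α.act_congr ?_ rfl _ _)
    · simp only [Category.assoc, φ.hom_str, ← h']
    · simp only [Category.assoc]
  one_act x h := by
    refine (α.act_congr ?_ rfl _ ?_).trans (α.one_act x ?_)
    · simp only [Category.assoc, φ.hom_one]
    · simp only [Category.assoc, G.one_str, Category.comp_id]
    · simp only [Category.assoc, G.one_str, Category.comp_id]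
  mul_act g g' x h₁ h₂ h₃ h₄ := by
    have hg : g ≫ H.str = x ≫ X.str := (H.mul_str g g' h₁).symm.trans h₂
    have hg' : g' ≫ H.str = x ≫ X.str := h₁.symm.trans hg
    have p1 : (g ≫ φ.hom) ≫ G.str = (g' ≫ φ.hom) ≫ G.str := by
      simp only [Category.assoc, φ.hom_str]; exact h₁
    have p3 : (g' ≫ φ.hom) ≫ G.str = x ≫ X.str := by
      simp only [Category.assoc, φ.hom_str]; exact hg'
    refine (α.act_congr (φ.hom_mul g g' h₁ p1) rfl _ ?_).trans
      (α.mul_act (g ≫ φ.hom) (g' ≫ φ.hom) x p1 ?_ p3 ?_)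
    · rw [G.mul_str]
      simp only [Category.assoc, φ.hom_str]; exact hg
    · rw [G.mul_str]
      simp only [Category.assoc, φ.hom_str]; exact hg
    · rw [α.act_str]
      simp only [Category.assoc, φ.hom_str]; exact hg
/-! ### Vector bundles and line bundles, geometrically -/

/-- The data underlying a (geometric) vector bundle on a scheme `X`: a total space `π : tot ⟶ X`
together with a fiberwise `Γ(T, ⊤)`-module structure on the `T`-points of `tot` over a fixed
`T`-point of `X`, functorially in `T`. -/
structure VecBundleData (X : Scheme.{u}) : Type (u + 1) where
  tot : Scheme.{u}
  π : tot ⟶ X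
  zero : X ⟶ tot
  zero_π : zero ≫ π = 𝟙 X
  add : ∀ {T : Scheme.{u}} (a b : T ⟶ tot), a ≫ π = b ≫ π → (T ⟶ tot)
  smul : ∀ {T : Scheme.{u}} (f : Γ(T, ⊤)) (a : T ⟶ tot), T ⟶ tot
  add_π : ∀ {T : Scheme.{u}} (a b : T ⟶ tot) (h), add a b h ≫ π = a ≫ π
  smul_π : ∀ {T : Scheme.{u}} (f : Γ(T, ⊤)) (a : T ⟶ tot), smul f a ≫ π = a ≫ π
  add_natural : ∀ {T' T : Scheme.{u}} (g : T' ⟶ T) (a b : T ⟶ tot) (h h'),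
    g ≫ add a b h = add (g ≫ a) (g ≫ b) h'
  smul_natural : ∀ {T' T : Scheme.{u}} (g : T' ⟶ T) (f : Γ(T, ⊤)) (a : T ⟶ tot),
    g ≫ smul f a = smul (g.appTop f) (g ≫ a)
  add_comm : ∀ {T : Scheme.{u}} (a b : T ⟶ tot) (h h'), add a b h = add b a h'
  add_assoc : ∀ {T : Scheme.{u}} (a b c : T ⟶ tot) (h₁ h₂ h₃ h₄),
    add (add a b h₁) c h₂ = add a (add b c h₃) h₄
  zero_add : ∀ {T : Scheme.{u}} (a : T ⟶ tot) (h), add ((a ≫ π) ≫ zero) a h = a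
  one_smul : ∀ {T : Scheme.{u}} (a : T ⟶ tot), smul 1 a = a
  mul_smul : ∀ {T : Scheme.{u}} (f g : Γ(T, ⊤)) (a : T ⟶ tot), smul (f * g) a = smul f (smul g a)
  smul_add : ∀ {T : Scheme.{u}} (f : Γ(T, ⊤)) (a b : T ⟶ tot) (h h'),
    smul f (add a b h) = add (smul f a) (smul f b) h'
  add_smul : ∀ {T : Scheme.{u}} (f g : Γ(T, ⊤)) (a : T ⟶ tot) (h),
    smul (f + g) a = add (smul f a) (smul g a) h
  zero_smul : ∀ {T : Scheme.{u}} (a : T ⟶ tot), smul 0 a = (a ≫ π) ≫ zero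
  smul_zero : ∀ {T : Scheme.{u}} (f : Γ(T, ⊤)) (x : T ⟶ X), smul f (x ≫ zero) = x ≫ zero

namespace VecBundleData

variable {X : Scheme.{u}} (E : VecBundleData X)

theorem add_congr {T : Scheme.{u}} {a a' b b' : T ⟶ E.tot} (ha : a = a') (hb : b = b')
    (h h') : E.add a b h = E.add a' b' h' := by subst ha; subst hb; rfl

/-- The fiber of a vector bundle over a `T`-point of the base. -/
abbrev Fiber {T : Scheme.{u}} (x : T ⟶ X) : Type u := { a : T ⟶ E.tot // a ≫ E.π = x }

instance fiberZero {T : Scheme.{u}} (x : T ⟶ X) : Zero (E.Fiber x) :=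
  ⟨⟨x ≫ E.zero, by rw [Category.assoc, E.zero_π, Category.comp_id]⟩⟩

instance fiberAdd {T : Scheme.{u}} (x : T ⟶ X) : Add (E.Fiber x) :=
  ⟨fun a b => ⟨E.add a.1 b.1 (a.2.trans b.2.symm), (E.add_π _ _ _).trans a.2⟩⟩

instance fiberSMul {T : Scheme.{u}} (x : T ⟶ X) : SMul Γ(T, ⊤) (E.Fiber x) :=
  ⟨fun f a => ⟨E.smul f a.1, (E.smul_π _ _).trans a.2⟩⟩

@[simp] theorem coe_fiber_zero {T : Scheme.{u}} (x : T ⟶ X) :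
    ((0 : E.Fiber x) : T ⟶ E.tot) = x ≫ E.zero := rfl

@[simp] theorem coe_fiber_add {T : Scheme.{u}} (x : T ⟶ X) (a b : E.Fiber x) :
    ((a + b : E.Fiber x) : T ⟶ E.tot) = E.add a.1 b.1 (a.2.trans b.2.symm) := rfl

@[simp] theorem coe_fiber_smul {T : Scheme.{u}} (x : T ⟶ X) (f : Γ(T, ⊤)) (a : E.Fiber x) :
    ((f • a : E.Fiber x) : T ⟶ E.tot) = E.smul f a.1 := rfl

instance {T : Scheme.{u}} (x : T ⟶ X) : AddCommMonoid (E.Fiber x) where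
  add_assoc a b c := Subtype.ext (E.add_assoc _ _ _ _ _ _ _)
  add_comm a b := Subtype.ext (E.add_comm _ _ _ _)
  zero_add a := Subtype.ext (by
    have hz : ((a.1 ≫ E.π) ≫ E.zero) ≫ E.π = a.1 ≫ E.π := by
      rw [Category.assoc, E.zero_π, Category.comp_id]
    show E.add (x ≫ E.zero) a.1 _ = a.1
    exact (E.add_congr (by rw [a.2]) rfl _ hz).trans (E.zero_add a.1 hz))
  add_zero a := Subtype.ext (by
    have hz : ((a.1 ≫ E.π) ≫ E.zero) ≫ E.π = a.1 ≫ E.π := by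
      rw [Category.assoc, E.zero_π, Category.comp_id]
    have hz' : (x ≫ E.zero) ≫ E.π = a.1 ≫ E.π := by
      rw [Category.assoc, E.zero_π, Category.comp_id, a.2]
    show E.add a.1 (x ≫ E.zero) _ = a.1
    exact (E.add_comm _ _ _ hz').trans
      ((E.add_congr (by rw [a.2]) rfl _ hz).trans (E.zero_add a.1 hz)))
  nsmul := nsmulRec
  nsmul_zero _ := rfl
  nsmul_succ _ _ := rfl

instance {T : Scheme.{u}} (x : T ⟶ X) : Module Γ(T, ⊤) (E.Fiber x) where
  one_smul a := Subtype.ext (E.one_smul a.1)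
  mul_smul f g a := Subtype.ext (E.mul_smul f g a.1)
  smul_zero f := Subtype.ext (E.smul_zero f x)
  smul_add f a b := Subtype.ext (E.smul_add f a.1 b.1 _ _)
  add_smul f g a := Subtype.ext (E.add_smul f g a.1 _)
  zero_smul a := Subtype.ext ((E.zero_smul a.1).trans (by rw [a.2]; rfl))

/-- A family of `n` local sections of `E` over an open subset `U` is a frame if every point
of the total space over `U` is, in a unique way, a linear combination of these sections. -/
def IsFrame {n : ℕ} (U : X.Opens) (s : Fin n → (U.toScheme ⟶ E.tot)) : Prop :=
  ∃ hs : ∀ i, s i ≫ E.π = U.ι,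
    ∀ {T : Scheme.{u}} (x : T ⟶ U.toScheme),
      Function.Bijective (fun f : Fin n → Γ(T, ⊤) =>
        (∑ i, f i • (⟨x ≫ s i, by rw [Category.assoc, hs i]⟩ : E.Fiber (x ≫ U.ι))))

/-- A family of `n` global sections of `E` is a global frame if every point of the total
space is, in a unique way, a linear combination of these sections. -/
def IsGlobalFrame {n : ℕ} (s : Fin n → (X ⟶ E.tot)) : Prop :=
  ∃ hs : ∀ i, s i ≫ E.π = 𝟙 X,
    ∀ {T : Scheme.{u}} (x : T ⟶ X),
      Function.Bijective (fun f : Fin n → Γ(T, ⊤) =>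
        (∑ i, f i • (⟨x ≫ s i, by rw [Category.assoc, hs i, Category.comp_id]⟩ : E.Fiber x)))

end VecBundleData

/-- A (geometric) vector bundle of rank `n` on `X`: bundle data which is locally trivial,
i.e. admits local frames around every point of `X`. -/
structure VecBundle (n : ℕ) (X : Scheme.{u}) extends VecBundleData X where
  locTriv : ∀ x : X, ∃ (U : X.Opens) (s : Fin n → (U.toScheme ⟶ tot)),
    x ∈ U ∧ toVecBundleData.IsFrame U s

/-- A (geometric) line bundle on a scheme. -/
abbrev LineBundle (X : Scheme.{u}) := VecBundle 1 X

/-- A morphism of total spaces of vector bundles over `X` is linear if it commutes with the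
projections, the fiberwise additions and the fiberwise scalar multiplications. -/
def IsLinearHom {X : Scheme.{u}} (E F : VecBundleData X) (φ : E.tot ⟶ F.tot) : Prop :=
  (φ ≫ F.π = E.π) ∧
  (∀ {T : Scheme.{u}} (a b : T ⟶ E.tot) (h h'), E.add a b h ≫ φ = F.add (a ≫ φ) (b ≫ φ) h') ∧
  (∀ {T : Scheme.{u}} (f : Γ(T, ⊤)) (a : T ⟶ E.tot), E.smul f a ≫ φ = F.smul f (a ≫ φ))

/-- Two vector bundles on `X` are isomorphic if there is a linear isomorphism between them. -/
def VBIso {X : Scheme.{u}} {n m : ℕ} (E : VecBundle n X) (F : VecBundle m X) : Prop :=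
  ∃ φ : E.tot ⟶ F.tot, IsLinearHom E.toVecBundleData F.toVecBundleData φ ∧ IsIso φ

/-- `F` is a pullback of the vector bundle `E` along `g : Y ⟶ X`. -/
def IsPullbackBundle {Y X : Scheme.{u}} (g : Y ⟶ X) {n : ℕ} (E : VecBundle n X)
    (F : VecBundle n Y) : Prop :=
  ∃ τ : F.tot ⟶ E.tot,
    (τ ≫ E.π = F.π ≫ g) ∧
    (∀ {T : Scheme.{u}} (a b : T ⟶ F.tot) (h h'), F.add a b h ≫ τ = E.add (a ≫ τ) (b ≫ τ) h') ∧
    (∀ {T : Scheme.{u}} (f : Γ(T, ⊤)) (a : T ⟶ F.tot), F.smul f a ≫ τ = E.smul f (a ≫ τ)) ∧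
    (∀ {T : Scheme.{u}} (y : T ⟶ Y) (a : T ⟶ E.tot), a ≫ E.π = y ≫ g →
      ∃! b : T ⟶ F.tot, b ≫ F.π = y ∧ b ≫ τ = a)

/-- A vector bundle is trivial if it admits a global frame. -/
def IsTrivialBundle {X : Scheme.{u}} {n : ℕ} (E : VecBundle n X) : Prop :=
  ∃ s : Fin n → (X ⟶ E.tot), E.toVecBundleData.IsGlobalFrame s

/-- `N` is a tensor product of the line bundles `L` and `M`: witnessed by a fiberwise
bilinear pairing taking local frames to local frames. -/
def IsTensor {X : Scheme.{u}} (L M N : LineBundle X) : Prop :=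
  ∃ β : ∀ {T : Scheme.{u}} (a : T ⟶ L.tot) (b : T ⟶ M.tot), a ≫ L.π = b ≫ M.π → (T ⟶ N.tot),
    (∀ {T : Scheme.{u}} (a : T ⟶ L.tot) (b : T ⟶ M.tot) (h), β a b h ≫ N.π = a ≫ L.π) ∧
    (∀ {T' T : Scheme.{u}} (g : T' ⟶ T) (a : T ⟶ L.tot) (b : T ⟶ M.tot) (h h'),
      g ≫ β a b h = β (g ≫ a) (g ≫ b) h') ∧
    (∀ {T : Scheme.{u}} (a a' : T ⟶ L.tot) (b : T ⟶ M.tot) (h₁ h₂ h₃ h₄ h₅),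
      β (L.add a a' h₁) b h₂ = N.add (β a b h₃) (β a' b h₄) h₅) ∧
    (∀ {T : Scheme.{u}} (a : T ⟶ L.tot) (b b' : T ⟶ M.tot) (h₁ h₂ h₃ h₄ h₅),
      β a (M.add b b' h₁) h₂ = N.add (β a b h₃) (β a b' h₄) h₅) ∧
    (∀ {T : Scheme.{u}} (f : Γ(T, ⊤)) (a : T ⟶ L.tot) (b : T ⟶ M.tot) (h₁ h₂),
      β (L.smul f a) b h₁ = N.smul f (β a b h₂)) ∧
    (∀ {T : Scheme.{u}} (f : Γ(T, ⊤)) (a : T ⟶ L.tot) (b : T ⟶ M.tot) (h₁ h₂),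
      β a (M.smul f b) h₁ = N.smul f (β a b h₂)) ∧
    (∀ (U : X.Opens) (sL : Fin 1 → (U.toScheme ⟶ L.tot)) (sM : Fin 1 → (U.toScheme ⟶ M.tot)),
      L.toVecBundleData.IsFrame U sL → M.toVecBundleData.IsFrame U sM →
      ∀ (h : sL 0 ≫ L.π = sM 0 ≫ M.π),
        N.toVecBundleData.IsFrame (n := 1) U (fun _ => β (sL 0) (sM 0) h))

/-- `N` is an `m`-th tensor power of the line bundle `L`. -/
def IsTensorPow {X : Scheme.{u}} (L : LineBundle X) : ℕ → LineBundle X → Prop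
  | 0, N => IsTrivialBundle N
  | m + 1, N => ∃ M : LineBundle X, IsTensorPow L m M ∧ IsTensor M L N

/-- A line bundle is ample if the base is quasi-compact and quasi-separated and the
non-vanishing loci of global sections of positive tensor powers give an affine open cover. -/
def IsAmple {X : Scheme.{u}} (L : LineBundle X) : Prop :=
  CompactSpace X ∧ QuasiSeparatedSpace X ∧
  ∀ x : X, ∃ (m : ℕ), 0 < m ∧ ∃ (N : LineBundle X), IsTensorPow L m N ∧
    ∃ (s : X ⟶ N.tot), s ≫ N.π = 𝟙 X ∧
      ∃ U : X.Opens, IsAffineOpen U ∧ x ∈ U ∧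
        (U : Set X) = {y : X | s.base y ≠ N.zero.base y}
/-! ### Properties of schemes and group schemes over `k` -/

/-- An algebraic group over `k` is a group scheme of finite type over `k`. -/
def GroupSchemeOver.IsAlgebraic {k : Type u} [Field k] (G : GroupSchemeOver k) : Prop :=
  LocallyOfFiniteType G.str ∧ QuasiCompact G.str

/-- A scheme of finite type over `k`. -/
def SchemeOver.IsFiniteType {k : Type u} [Field k] (X : SchemeOver k) : Prop :=
  LocallyOfFiniteType X.str ∧ QuasiCompact X.str

/-- A variety over `k`: an integral separated scheme of finite type over `k`. -/
def SchemeOver.IsVariety {k : Type u} [Field k] (X : SchemeOver k) : Prop :=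
  IsIntegral X.carrier ∧ AlgebraicGeometry.IsSeparated X.str ∧ X.IsFiniteType

/-- A scheme is normal if all its local rings are integrally closed domains. -/
def IsNormalScheme (X : Scheme.{u}) : Prop :=
  ∀ x : X, IsDomain (X.presheaf.stalk x) ∧ IsIntegrallyClosed (X.presheaf.stalk x)

/-- The base change of a scheme over `k` to the algebraic closure of `k`. -/
def SchemeOver.geomFiber {k : Type u} [Field k] (X : SchemeOver k) : Scheme.{u} :=
  pullback X.str (Spec.map (CommRingCat.ofHom (algebraMap k (AlgebraicClosure k))))

/-- A scheme over `k` is geometrically integral if its base change to an algebraic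
closure of `k` is integral. -/
def SchemeOver.IsGeomIntegral {k : Type u} [Field k] (X : SchemeOver k) : Prop :=
  IsIntegral X.geomFiber

/-- A scheme over `k` is geometrically connected if its base change to an algebraic
closure of `k` is connected. -/
def SchemeOver.IsGeomConnected {k : Type u} [Field k] (X : SchemeOver k) : Prop :=
  ConnectedSpace X.geomFiber

/-- A scheme over `k` is geometrically irreducible if its base change to an algebraic
closure of `k` is irreducible. -/
def SchemeOver.IsGeomIrreducible {k : Type u} [Field k] (X : SchemeOver k) : Prop :=
  IrreducibleSpace X.geomFiber

/-- An open subscheme of a scheme over `k`, as a scheme over `k`. -/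
def SchemeOver.ofOpens {k : Type u} [Field k] (X : SchemeOver k) (U : X.carrier.Opens) :
    SchemeOver k :=
  ⟨U.toScheme, U.ι ≫ X.str⟩

/-- A scheme over `k` is quasi-projective if it is separated, of finite type, and carries
an ample line bundle. -/
def SchemeOver.IsQuasiProjective {k : Type u} [Field k] (X : SchemeOver k) : Prop :=
  AlgebraicGeometry.IsSeparated X.str ∧ X.IsFiniteType ∧
    ∃ L : LineBundle X.carrier, IsAmple L

/-- An open subset of `X` is stable under an action of `G` if the action preserves its
`T`-points, for all `T`. -/
def ActionOver.Stable {k : Type u} [Field k] {G : GroupSchemeOver k} {X : SchemeOver k}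
    (α : ActionOver G X) (U : X.carrier.Opens) : Prop :=
  ∀ {T : Scheme.{u}} (g : T ⟶ G.carrier) (x : T ⟶ X.carrier) (h),
    Set.range x.base ⊆ (U : Set X.carrier) →
      Set.range (α.act g x h).base ⊆ (U : Set X.carrier)

/-- A `G`-linearization of a vector bundle `E` on a `G`-scheme `X`: an action of `G` on the
total space of `E`, lifting the action on `X` and acting linearly on the fibers (equivalently,
an action of `G × 𝔾ₘ` on `E` for which the projection is equivariant and `𝔾ₘ` acts by
multiplication on the fibers). -/
structure LinearizationData {k : Type u} [Field k] {G : GroupSchemeOver k} {X : SchemeOver k}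
    (α : ActionOver G X) {n : ℕ} (E : VecBundle n X.carrier) where
  lact : ∀ {T : Scheme.{u}} (g : T ⟶ G.carrier) (e : T ⟶ E.tot),
    g ≫ G.str = (e ≫ E.π) ≫ X.str → (T ⟶ E.tot)
  lact_π : ∀ {T : Scheme.{u}} (g : T ⟶ G.carrier) (e : T ⟶ E.tot) (h h'),
    lact g e h ≫ E.π = α.act g (e ≫ E.π) h'
  lact_natural : ∀ {T' T : Scheme.{u}} (f : T' ⟶ T) (g : T ⟶ G.carrier) (e : T ⟶ E.tot) (h h'),
    f ≫ lact g e h = lact (f ≫ g) (f ≫ e) h'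
  one_lact : ∀ {T : Scheme.{u}} (e : T ⟶ E.tot) (h), lact (((e ≫ E.π) ≫ X.str) ≫ G.one) e h = e
  mul_lact : ∀ {T : Scheme.{u}} (g g' : T ⟶ G.carrier) (e : T ⟶ E.tot) (h₁ h₂ h₃ h₄),
    lact (G.mul g g' h₁) e h₂ = lact g (lact g' e h₃) h₄
  lact_add : ∀ {T : Scheme.{u}} (g : T ⟶ G.carrier) (a b : T ⟶ E.tot) (h₁ h₂ h₃ h₄ h₅),
    lact g (E.add a b h₁) h₂ = E.add (lact g a h₃) (lact g b h₄) h₅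
  lact_smul : ∀ {T : Scheme.{u}} (g : T ⟶ G.carrier) (f : Γ(T, ⊤)) (a : T ⟶ E.tot) (h₁ h₂),
    lact g (E.smul f a) h₁ = E.smul f (lact g a h₂)

/-- A vector bundle is `G`-linearized (linearizable) if it admits a linearization. -/
def ActionOver.IsLinearized {k : Type u} [Field k] {G : GroupSchemeOver k} {X : SchemeOver k}
    (α : ActionOver G X) {n : ℕ} (E : VecBundle n X.carrier) : Prop :=
  Nonempty (LinearizationData α E)

/-- Equivariance of a morphism relative to a homomorphism of group schemes. -/
def IsEquivariantRel {k : Type u} [Field k] {G H : GroupSchemeOver k} {X Y : SchemeOver k}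
    (φ : GroupHom G H) (α : ActionOver G X) (β : ActionOver H Y)
    (f : X.carrier ⟶ Y.carrier) : Prop :=
  f ≫ Y.str = X.str ∧
  ∀ {T : Scheme.{u}} (g : T ⟶ G.carrier) (x : T ⟶ X.carrier) (h h'),
    α.act g x h ≫ f = β.act (g ≫ φ.hom) (x ≫ f) h'

/-- Equivariance of a morphism of `G`-schemes. -/
def IsEquivariant {k : Type u} [Field k] {G : GroupSchemeOver k} {X Y : SchemeOver k}
    (α : ActionOver G X) (β : ActionOver G Y) (f : X.carrier ⟶ Y.carrier) : Prop :=
  f ≫ Y.str = X.str ∧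
  ∀ {T : Scheme.{u}} (g : T ⟶ G.carrier) (x : T ⟶ X.carrier) (h h'),
    α.act g x h ≫ f = β.act g (x ≫ f) h'

/-- A `T`-point of `G` acts trivially if it acts trivially on all points of `X` over `T`. -/
def ActionOver.ActsTrivially {k : Type u} [Field k] {G : GroupSchemeOver k}
    {X : SchemeOver k} (α : ActionOver G X) {T : Scheme.{u}} (g : T ⟶ G.carrier) : Prop :=
  ∀ {T' : Scheme.{u}} (t : T' ⟶ T) (x : T' ⟶ X.carrier) (h), α.act (t ≫ g) x h = x

/-- An action is almost faithful if its kernel is finite, i.e. all trivially acting points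
factor through a fixed closed subscheme of `G` which is finite over `k`. -/
def ActionOver.IsAlmostFaithful {k : Type u} [Field k] {G : GroupSchemeOver k}
    {X : SchemeOver k} (α : ActionOver G X) : Prop :=
  ∃ (K : Scheme.{u}) (ι : K ⟶ G.carrier), IsClosedImmersion ι ∧ IsFinite (ι ≫ G.str) ∧
    ∀ {T : Scheme.{u}} (g : T ⟶ G.carrier), α.ActsTrivially g → ∃ g' : T ⟶ K, g' ≫ ι = g

/-- An abelian variety over `k` is a smooth connected proper algebraic group over `k`. -/
def GroupSchemeOver.IsAbelianVariety {k : Type u} [Field k] (G : GroupSchemeOver k) : Prop :=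
  G.IsAlgebraic ∧ IsSmooth G.str ∧ ConnectedSpace G.carrier ∧ IsProper G.str
/-! ### Frobenius twists and quotients in characteristic `p` -/

/-- The morphism `Spec k ⟶ Spec k` induced by the `n`-th iterate of the Frobenius of `k`. -/
def frobSpec (k : Type u) [Field k] (p : ℕ) [Fact p.Prime] [CharP k p] (n : ℕ) :
    Spk k ⟶ Spk k :=
  Spec.map (CommRingCat.ofHom (iterateFrobenius k p n))

/-- `F : X ⟶ X` is the absolute `q`-power Frobenius endomorphism of `X`: the identity on the
underlying space, and the `q`-th power map on functions. -/
def IsAbsoluteFrobenius (X : Scheme.{u}) (q : ℕ) (F : X ⟶ X) : Prop :=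
  (∀ x : X, F.base x = x) ∧
  ∀ (U : X.Opens) (e : Opposite.op U = Opposite.op (F ⁻¹ᵁ U)) (a : Γ(X, U)),
    F.app U a = X.presheaf.map (eqToHom e) (a ^ q)

/-- Data exhibiting the `n`-th Frobenius twist `X^{(pⁿ)}` of a scheme `X` over `k` (as the base
change of `X` along the `n`-th Frobenius of `k`), together with the relative Frobenius morphism
`F^n_{X/k} : X ⟶ X^{(pⁿ)}` (the canonical factorization of the absolute Frobenius). -/
structure FrobeniusData (k : Type u) [Field k] (p : ℕ) [Fact p.Prime] [CharP k p] (n : ℕ)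
    (X : SchemeOver k) where
  tw : SchemeOver k
  pr : tw.carrier ⟶ X.carrier
  is_pullback : IsPullback pr tw.str X.str (frobSpec k p n)
  rel : X.carrier ⟶ tw.carrier
  rel_str : rel ≫ tw.str = X.str
  abs : X.carrier ⟶ X.carrier
  abs_frob : IsAbsoluteFrobenius X.carrier (p ^ n) abs
  rel_pr : rel ≫ pr = abs

/-- A group scheme over `k` is infinitesimal if it is finite and radicial over `Spec k`. -/
def GroupSchemeOver.IsInfinitesimal {k : Type u} [Field k] (I : GroupSchemeOver k) : Prop :=
  I.IsAlgebraic ∧ IsFinite I.str ∧ UniversallyInjective I.str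

/-- `n` is at least the height of the infinitesimal group scheme `I`, i.e. the `n`-th relative
Frobenius of `I` factors through the unit section of the twist (equivalently `I_n = I`). -/
def FrobKillsAt (k : Type u) [Field k] (p : ℕ) [Fact p.Prime] [CharP k p]
    (I : GroupSchemeOver k) (n : ℕ) : Prop :=
  ∀ FD : FrobeniusData k p n I.toSchemeOver,
    ∃ u : Spk k ⟶ FD.tw.carrier,
      u ≫ FD.pr = frobSpec k p n ≫ I.one ∧ u ≫ FD.tw.str = 𝟙 (Spk k) ∧
      FD.rel = I.str ≫ u

/-- `φ : X ⟶ Q` is a categorical quotient (in the category of schemes over `k`) of `X` by the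
action `α`. -/
def IsCatQuotient {k : Type u} [Field k] {I : GroupSchemeOver k} {X : SchemeOver k}
    (α : ActionOver I X) (Q : SchemeOver k) (φ : X.carrier ⟶ Q.carrier) : Prop :=
  φ ≫ Q.str = X.str ∧
  (∀ {T : Scheme.{u}} (g : T ⟶ I.carrier) (x : T ⟶ X.carrier) (h),
    α.act g x h ≫ φ = x ≫ φ) ∧
  ∀ (Z : SchemeOver k) (u : X.carrier ⟶ Z.carrier), u ≫ Z.str = X.str →
    (∀ {T : Scheme.{u}} (g : T ⟶ I.carrier) (x : T ⟶ X.carrier) (h),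
      α.act g x h ≫ u = x ≫ u) →
    ∃! v : Q.carrier ⟶ Z.carrier, φ ≫ v = u

/-- Data exhibiting the Frobenius twist `G^{(pⁿ)}` of a group scheme `G` over `k`, as a group
scheme, together with the relative Frobenius homomorphism. -/
structure TwistedGroupData (k : Type u) [Field k] (p : ℕ) [Fact p.Prime] [CharP k p] (n : ℕ)
    (G : GroupSchemeOver k) where
  tw : GroupSchemeOver k
  pr : tw.carrier ⟶ G.carrier
  is_pullback : IsPullback pr tw.str G.str (frobSpec k p n)
  pr_mul : ∀ {T : Scheme.{u}} (a b : T ⟶ tw.carrier) (h h'),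
    tw.mul a b h ≫ pr = G.mul (a ≫ pr) (b ≫ pr) h'
  rel : GroupHom G tw
  abs : G.carrier ⟶ G.carrier
  abs_frob : IsAbsoluteFrobenius G.carrier (p ^ n) abs
  rel_pr : rel.hom ≫ pr = abs

/-- Data exhibiting the Frobenius twist of an action: the induced action of `G^{(pⁿ)}` on
`X^{(pⁿ)}`, compatible with the projections and with the relative Frobenii. -/
structure TwistedActionData {k : Type u} [Field k] {p : ℕ} [Fact p.Prime] [CharP k p] {n : ℕ}
    {G : GroupSchemeOver k} {X : SchemeOver k} (α : ActionOver G X)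
    (GT : TwistedGroupData k p n G) (FD : FrobeniusData k p n X) where
  tact : ActionOver GT.tw FD.tw
  compat : ∀ {T : Scheme.{u}} (g : T ⟶ GT.tw.carrier) (x : T ⟶ FD.tw.carrier) (h h'),
    tact.act g x h ≫ FD.pr = α.act (g ≫ GT.pr) (x ≫ FD.pr) h'
  rel_equivariant : ∀ {T : Scheme.{u}} (g : T ⟶ G.carrier) (x : T ⟶ X.carrier) (h h'),
    α.act g x h ≫ FD.rel = tact.act (g ≫ GT.rel.hom) (x ≫ FD.rel) h'

/-! ### Absolute Frobenius morphisms -/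

/-- The `p ^ n`-power map as a ring homomorphism, for rings in which `p = 0`. -/
def powHom (R : Type u) [CommRing R] (p : ℕ) [hp : Fact p.Prime] (h : (p : R) = 0) (n : ℕ) :
    R →+* R where
  toFun a := a ^ p ^ n
  map_one' := one_pow _
  map_mul' a b := mul_pow a b _
  map_zero' := zero_pow (pow_ne_zero _ hp.out.ne_zero)
  map_add' a b := by
    rcases subsingleton_or_nontrivial R with hR | hR
    · exact Subsingleton.elim _ _
    · have : CharP R p := ringChar.of_eq (CharP.ringChar_of_prime_eq_zero hp.out h)
      exact add_pow_char_pow a b p n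

theorem powHom_apply (R : Type u) [CommRing R] (p : ℕ) [hp : Fact p.Prime] (h : (p : R) = 0)
    (n : ℕ) (a : R) : powHom R p h n a = a ^ p ^ n := rfl

theorem natCast_section_eq_zero {X : Scheme.{u}} {p : ℕ} (h : (p : Γ(X, ⊤)) = 0) (U : X.Opens) :
    (p : Γ(X, U)) = 0 := by
  have := congr((X.presheaf.map (homOfLE le_top : U ⟶ ⊤).op).hom $h)
  simpa using this

/-- The absolute Frobenius as a morphism of presheafed spaces. -/
def absFrobPre (X : Scheme.{u}) (p : ℕ) [Fact p.Prime] (h : (p : Γ(X, ⊤)) = 0) (n : ℕ) :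
    X.toPresheafedSpace ⟶ X.toPresheafedSpace where
  base := 𝟙 _
  c :=
    { app U := CommRingCat.ofHom (powHom Γ(X, U.unop) p (natCast_section_eq_zero h _) n)
      naturality U V i := by
        ext a
        exact (map_pow (X.presheaf.map i).hom a _).symm }

theorem absFrobPre_stalk (X : Scheme.{u}) (p : ℕ) [Fact p.Prime] (h : (p : Γ(X, ⊤)) = 0) (n : ℕ)
    (x : X) (a : X.presheaf.stalk x) :
    ((absFrobPre X p h n).stalkMap x).hom a = a ^ p ^ n := by
  obtain ⟨U, hx, s, rfl⟩ := X.presheaf.exists_germ_eq (x := x) a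
  rw [← map_pow]
  exact congr($(PresheafedSpace.stalkMap_germ (absFrobPre X p h n) U x hx) s)

/-- The absolute Frobenius. -/
def absFrob (X : Scheme.{u}) (p : ℕ) [Fact p.Prime] (h : (p : Γ(X, ⊤)) = 0) (n : ℕ) : X ⟶ X :=
  ⟨⟨absFrobPre X p h n, fun x => ⟨fun a ha => by
    have e := absFrobPre_stalk X p h n x a
    have ha' : IsUnit ((show X.presheaf.stalk x from a) ^ p ^ n) := e ▸ ha
    exact (isUnit_pow_iff (pow_ne_zero _ (Fact.out : p.Prime).ne_zero)).mp ha'⟩⟩⟩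

theorem absFrob_isAbs (X : Scheme.{u}) (p : ℕ) [Fact p.Prime] (h : (p : Γ(X, ⊤)) = 0) (n : ℕ) :
    IsAbsoluteFrobenius X (p ^ n) (absFrob X p h n) := by
  refine ⟨fun x => rfl, fun U e a => ?_⟩
  have : eqToHom e = 𝟙 _ := rfl
  rw [this]
  erw [X.presheaf.map_id]
  rfl

theorem IsAbsoluteFrobenius.preimage {X : Scheme.{u}} {q : ℕ} {F : X ⟶ X}
    (hF : IsAbsoluteFrobenius X q F) (U : X.Opens) : F ⁻¹ᵁ U = U := by
  ext x
  change F.base x ∈ U ↔ x ∈ U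
  rw [hF.1]

theorem IsAbsoluteFrobenius.appLE {X : Scheme.{u}} {q : ℕ} {F : X ⟶ X}
    (hF : IsAbsoluteFrobenius X q F) (U V : X.Opens) (hV : V ≤ F ⁻¹ᵁ U) (hVU : V ≤ U)
    (a : Γ(X, U)) :
    F.appLE U V hV a = X.presheaf.map (homOfLE hVU).op (a ^ q) := by
  rw [Scheme.Hom.appLE, CommRingCat.comp_apply, hF.2 U (by rw [hF.preimage]) a,
    ← CommRingCat.comp_apply, ← X.presheaf.map_comp]
  rfl

theorem IsAbsoluteFrobenius.natural {X Y : Scheme.{u}} {q : ℕ} {F : X ⟶ X} {G : Y ⟶ Y}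
    (hF : IsAbsoluteFrobenius X q F) (hG : IsAbsoluteFrobenius Y q G) (f : X ⟶ Y) :
    F ≫ f = f ≫ G := by
  have hb : (F ≫ f).base = (f ≫ G).base := by
    ext x
    change f.base (F.base x) = G.base (f.base x)
    rw [hF.1, hG.1]
  refine Scheme.Hom.ext hb fun U => ?_
  ext a
  rw [Scheme.Hom.app_eq_appLE, Scheme.Hom.app_eq_appLE, Scheme.Hom.appLE_map]
  have e : f ⁻¹ᵁ U = (f ≫ G) ⁻¹ᵁ U := by rw [Scheme.Hom.comp_preimage, hG.preimage]
  have h1 := Scheme.Hom.appLE_comp_appLE F f U (f ⁻¹ᵁ U) ((f ≫ G) ⁻¹ᵁ U) le_rfl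
    (by rw [hF.preimage, e])
  have h2 := Scheme.Hom.appLE_comp_appLE f G U U ((f ≫ G) ⁻¹ᵁ U) (by rw [hG.preimage]) e.ge
  rw [← h1, ← h2, CommRingCat.comp_apply, CommRingCat.comp_apply, hF.appLE _ _ _ e.ge,
    hG.appLE _ _ _ le_rfl]
  rw [← map_pow, ← Scheme.Hom.app_eq_appLE]
  have : (homOfLE (le_refl U)).op = 𝟙 _ := rfl
  rw [this, Y.presheaf.map_id, CommRingCat.id_apply, ← CommRingCat.comp_apply,
    Scheme.Hom.app_eq_appLE, Scheme.Hom.appLE_map]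

theorem charZero_of_over {k : Type u} [Field k] (p : ℕ) [CharP k p] {X : Scheme.{u}}
    (s : X ⟶ Spk k) : (p : Γ(X, ⊤)) = 0 := by
  have h : (p : k) = 0 := CharP.cast_eq_zero k p
  have := congr(((Scheme.ΓSpecIso (CommRingCat.of k)).inv ≫ s.appTop).hom $h)
  rwa [map_natCast, map_zero] at this

theorem frobSpec_isAbs (k : Type u) [Field k] (p : ℕ) [Fact p.Prime] [CharP k p] (n : ℕ) :
    IsAbsoluteFrobenius (Spk k) (p ^ n) (frobSpec k p n) := by
  have h := charZero_of_over p (𝟙 (Spk k))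
  have : frobSpec k p n = absFrob (Spk k) p h n := by
    refine ext_of_isAffine ?_
    ext a
    have h1 : (absFrob (Spk k) p h n).appTop a = a ^ p ^ n := rfl
    rw [h1]
    obtain ⟨b, rfl⟩ := (ConcreteCategory.bijective_of_isIso
      (Scheme.ΓSpecIso (CommRingCat.of k)).inv).2 a
    rw [← map_pow, frobSpec, ← CommRingCat.comp_apply, ← Scheme.ΓSpecIso_inv_naturality]
    rfl
  rw [this]
  exact absFrob_isAbs _ _ _ _

theorem abs_str {k : Type u} [Field k] (p : ℕ) [Fact p.Prime] [CharP k p] (n : ℕ)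
    (X : SchemeOver k) {F : X.carrier ⟶ X.carrier} (hF : IsAbsoluteFrobenius X.carrier (p ^ n) F) :
    F ≫ X.str = X.str ≫ frobSpec k p n :=
  hF.natural (frobSpec_isAbs k p n) _

/-- Frobenius data exist for every scheme over `k`. -/
def frobData (k : Type u) [Field k] (p : ℕ) [Fact p.Prime] [CharP k p] (n : ℕ)
    (X : SchemeOver k) : FrobeniusData k p n X where
  tw := ⟨pullback X.str (frobSpec k p n), pullback.snd _ _⟩
  pr := pullback.fst _ _
  is_pullback := IsPullback.of_hasPullback _ _
  rel := pullback.lift (absFrob X.carrier p (charZero_of_over p X.str) n) X.str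
    (abs_str p n X (absFrob_isAbs _ _ _ _))
  rel_str := pullback.lift_snd _ _ _
  abs := absFrob X.carrier p (charZero_of_over p X.str) n
  abs_frob := absFrob_isAbs _ _ _ _
  rel_pr := pullback.lift_fst _ _ _


theorem epi_of_surj_inj {X Y : Scheme.{u}} (f : X ⟶ Y) (hs : Function.Surjective f.base)
    (hi : ∀ U : Y.Opens, Function.Injective (f.app U)) : Epi f := by
  refine ⟨fun {Z} g h e => ?_⟩
  have hb : g.base = h.base := by
    ext y
    obtain ⟨x, rfl⟩ := hs y
    exact congr(($e).base x)
  refine Scheme.Hom.ext hb fun U => ?_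
  have e' : g ⁻¹ᵁ U = h ⁻¹ᵁ U := by
    change (TopologicalSpace.Opens.map g.base).obj U = (TopologicalSpace.Opens.map h.base).obj U
    rw [hb]
  ext s
  apply hi
  have h3 : (f ≫ g).appLE U (f ⁻¹ᵁ h ⁻¹ᵁ U) (by rw [← e']; rfl) s =
    (f ≫ h).appLE U (f ⁻¹ᵁ h ⁻¹ᵁ U) le_rfl s := by simp only [e]
  rw [← Scheme.Hom.appLE_comp_appLE f g U (h ⁻¹ᵁ U) _ e'.ge le_rfl,
    ← Scheme.Hom.appLE_comp_appLE f h U (h ⁻¹ᵁ U) _ le_rfl le_rfl,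
    ← Scheme.Hom.app_eq_appLE, ← Scheme.Hom.app_eq_appLE] at h3
  exact h3

theorem UI_of_comp_left {X Y Z : Scheme.{u}} (f : X ⟶ Y) (g : Y ⟶ Z)
    [h : UniversallyInjective (f ≫ g)] : UniversallyInjective f := by
  refine (((tfae_universallyInjective f).out 0 1 :) :
    UniversallyInjective f ↔ ∀ (K : Type u) [Field K], _).mpr ?_
  have h' := ((tfae_universallyInjective (f ≫ g)).out 0 1).mp h
  intro K _ a b hab
  apply h' K
  simp only at hab ⊢
  rw [← Category.assoc, hab, Category.assoc]

theorem UI_of_comp_right {X Y Z : Scheme.{u}} (f : X ⟶ Y) (g : Y ⟶ Z) [Surjective f]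
    [h : UniversallyInjective (f ≫ g)] : UniversallyInjective g := by
  refine ⟨?_⟩
  intro P T i₁ i₂ g' hP a b hab
  let f' := pullback.snd f i₁
  have h1 : IsPullback (pullback.fst f i₁) f' f i₁ := IsPullback.of_hasPullback _ _
  have h2 := (h1.paste_vert hP.flip).flip
  obtain ⟨a', rfl⟩ := f'.surjective a
  obtain ⟨b', rfl⟩ := f'.surjective b
  have := h.universally_injective _ _ _ h2 (a₁ := a') (a₂ := b') (by simpa using hab)
  rw [this]

theorem abs_UI {k : Type u} [Field k] (p : ℕ) [Fact p.Prime] [CharP k p] (n : ℕ)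
    (X : SchemeOver k) {F : X.carrier ⟶ X.carrier} (hF : IsAbsoluteFrobenius X.carrier (p ^ n) F) :
    UniversallyInjective F := by
  refine (((tfae_universallyInjective F).out 0 1 :) :
    UniversallyInjective F ↔ ∀ (K : Type u) [Field K], _).mpr ?_
  intro K _ a b hab
  simp only at hab
  have h0 := charZero_of_over p (a ≫ X.str)
  have hG := absFrob_isAbs _ p h0 n
  have : Epi (absFrob _ p h0 n) := by
    apply epi_of_surj_inj
    · exact fun x => ⟨x, hG.1 x⟩
    · intro U
      rw [injective_iff_map_eq_zero]
      intro s hs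
      rw [hG.2 U rfl] at hs
      have : s ^ p ^ n = 0 := hs
      exact eq_zero_of_pow_eq_zero this
  rw [← cancel_epi (absFrob _ p h0 n), hG.natural hF, hG.natural hF, hab]

theorem abs_integral {X : Scheme.{u}} {q : ℕ} (hq : 0 < q) {F : X ⟶ X}
    (hF : IsAbsoluteFrobenius X q F) : IsIntegralHom F := by
  have : IsAffineHom F := ⟨fun U hU => by rw [hF.preimage]; exact hU⟩
  refine ⟨fun U hU s => ?_⟩
  have e : F ⁻¹ᵁ U = U := hF.preimage U
  let s' : Γ(X, U) := X.presheaf.map (homOfLE e.ge).op s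
  algebraize [(F.app U).hom]
  refine IsIntegral.of_pow hq ?_
  have : s ^ q = F.app U s' := by
    rw [hF.2 U (by rw [e]), map_pow]
    congr 1
    simp only [s', ← CommRingCat.comp_apply, ← Functor.map_comp]
    rw [Subsingleton.elim (_ ≫ _) (𝟙 _)]; simp
  rw [this]
  exact isIntegral_algebraMap (x := s')

section rel
variable {k : Type u} [Field k] {p : ℕ} [Fact p.Prime] [CharP k p] {n : ℕ} {X : SchemeOver k}
  (FD : FrobeniusData k p n X)

theorem FrobeniusData.rel_UI : UniversallyInjective FD.rel := by
  have := abs_UI p n X FD.abs_frob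
  rw [← FD.rel_pr] at this
  exact UI_of_comp_left FD.rel FD.pr

theorem FrobeniusData.pr_affine : IsAffineHom FD.pr :=
  MorphismProperty.of_isPullback FD.is_pullback.flip inferInstance

theorem frobSpec_UI : UniversallyInjective (frobSpec k p n) :=
  abs_UI p n ⟨Spk k, 𝟙 _⟩ (frobSpec_isAbs k p n)

theorem FrobeniusData.rel_surj : AlgebraicGeometry.Surjective FD.rel := by
  have : UniversallyInjective FD.pr :=
    MorphismProperty.of_isPullback FD.is_pullback.flip (frobSpec_UI (p := p) (n := n) (k := k))
  refine ⟨fun y => ⟨FD.pr y, FD.pr.injective ?_⟩⟩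
  have h := FD.abs_frob.1 (FD.pr y)
  rw [← FD.rel_pr] at h
  exact h

theorem FrobeniusData.rel_finite (hX : X.IsFiniteType) : IsFinite FD.rel := by
  have := hX.1
  rw [IsFinite.iff_isIntegralHom_and_locallyOfFiniteType]
  constructor
  · have := FD.pr_affine
    have := abs_integral (pow_pos (Fact.out : p.Prime).pos n) FD.abs_frob
    rw [← FD.rel_pr] at this
    exact IsIntegralHom.of_comp FD.rel FD.pr
  · have : LocallyOfFiniteType (FD.rel ≫ FD.tw.str) := by rw [FD.rel_str]; infer_instance
    exact locallyOfFiniteType_of_comp FD.rel FD.tw.str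

theorem FrobeniusData.tw_ft (hX : X.IsFiniteType) : FD.tw.IsFiniteType := by
  have := hX.1
  have := hX.2
  exact ⟨MorphismProperty.of_isPullback FD.is_pullback inferInstance,
    MorphismProperty.of_isPullback FD.is_pullback inferInstance⟩

theorem SchemeOver.IsFiniteType.noeth {X : SchemeOver k} (hX : X.IsFiniteType) :
    IsLocallyNoetherian X.carrier := by
  have := hX.1
  exact LocallyOfFiniteType.isLocallyNoetherian X.str

end rel

/-! Part C -/

theorem act_rel {k : Type u} [Field k] {p : ℕ} [Fact p.Prime] [CharP k p]
    {I : GroupSchemeOver k} {n : ℕ} (hn : FrobKillsAt k p I n) {X : SchemeOver k}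
    (α : ActionOver I X) (FD : FrobeniusData k p n X)
    {T : Scheme.{u}} (g : T ⟶ I.carrier) (x : T ⟶ X.carrier) (h) :
    α.act g x h ≫ FD.rel = x ≫ FD.rel := by
  obtain ⟨v, hv1, hv2, hv3⟩ := hn (frobData k p n I.toSchemeOver)
  have hI : (frobData k p n I.toSchemeOver).abs = I.str ≫ frobSpec k p n ≫ I.one := by
    rw [← (frobData k p n I.toSchemeOver).rel_pr, hv3, Category.assoc, hv1]
  have h0 := charZero_of_over p (x ≫ X.str)
  have hG := absFrob_isAbs _ p h0 n
  set G := absFrob T p h0 n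
  apply FD.is_pullback.hom_ext
  · rw [Category.assoc, Category.assoc, FD.rel_pr, ← hG.natural FD.abs_frob,
      ← hG.natural FD.abs_frob]
    have h' : (G ≫ g) ≫ I.str = (G ≫ x) ≫ X.str := by simp only [Category.assoc, h]
    rw [α.act_natural G g x h h']
    have e : G ≫ g = (G ≫ x) ≫ X.str ≫ I.one := by
      rw [hG.natural (frobData k p n I.toSchemeOver).abs_frob, hI, ← Category.assoc, h,
        Category.assoc, ← Category.assoc X.str, ← abs_str p n X FD.abs_frob,
        Category.assoc, ← Category.assoc x, ← hG.natural FD.abs_frob]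
    exact (α.act_congr e rfl h' (by rw [← e, h'])).trans (α.one_act _ _)
  · rw [Category.assoc, Category.assoc, FD.rel_str, α.act_str]

theorem exists_frobKillsAt {k : Type u} [Field k] (p : ℕ) [Fact p.Prime] [CharP k p]
    (I : GroupSchemeOver k) (hI : I.IsInfinitesimal) : ∃ n, 0 < n ∧ FrobKillsAt k p I n := by
  obtain ⟨-, hfin, hUI⟩ := hI
  have : IsAffine I.carrier := isAffine_of_isAffineHom I.str
  have hN : IsLocallyNoetherian I.carrier := LocallyOfFiniteType.isLocallyNoetherian I.str
  have hN' : IsNoetherianRing Γ(I.carrier, ⊤) :=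
    IsLocallyNoetherian.component_noetherian ⟨⊤, isAffineOpen_top _⟩
  obtain ⟨m, hm⟩ := IsNoetherianRing.isNilpotent_nilradical Γ(I.carrier, ⊤)
  have hker : ∀ s : Γ(I.carrier, ⊤), I.one.appTop s = 0 → s ^ p ^ (m + 1) = 0 := by
    intro s hs
    have h1 : IsNilpotent s := by
      rw [Scheme.isNilpotent_iff_basicOpen_eq_bot]
      rw [eq_bot_iff]
      intro y hy
      exfalso
      let z : Spk k := Classical.arbitrary _
      have hz : I.one z = y := I.str.injective (Subsingleton.elim _ _)
      have : z ∈ I.one ⁻¹ᵁ (I.carrier.basicOpen s) := by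
        change I.one z ∈ I.carrier.basicOpen s; rw [hz]; exact hy
      have e0 : I.one ⁻¹ᵁ (I.carrier.basicOpen s) = (Spk k).basicOpen (I.one.appTop s) :=
        Scheme.preimage_basicOpen _ _
      rw [e0, hs, Scheme.basicOpen_zero] at this
      exact this
    have h2 : s ^ m = 0 := by
      have := Ideal.pow_mem_pow (mem_nilradical.mpr h1) m
      rw [hm] at this
      exact this
    have hle : m ≤ p ^ (m + 1) :=
      (Nat.le_succ m).trans (Nat.lt_pow_self (Fact.out : p.Prime).one_lt).le
    exact pow_eq_zero_of_le hle h2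
  refine ⟨m + 1, Nat.succ_pos _, fun FD => ?_⟩
  have habs : FD.abs = I.str ≫ frobSpec k p (m + 1) ≫ I.one := by
    rw [← Category.assoc, ← abs_str p _ I.toSchemeOver FD.abs_frob, Category.assoc]
    refine ext_of_isAffine ?_
    ext s
    have e1 : ∀ t : Γ(I.carrier, ⊤), FD.abs.appTop t = t ^ p ^ (m + 1) := by
      intro t
      have := FD.abs_frob.appLE ⊤ ⊤ le_rfl le_rfl t
      rw [Subsingleton.elim (homOfLE _).op (𝟙 _), CategoryTheory.Functor.map_id] at this
      refine Eq.trans ?_ this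
      exact congr(($(Scheme.Hom.app_eq_appLE (f := FD.abs) (U := ⊤))) t)
    simp only [Scheme.Hom.comp_appTop, CommRingCat.hom_comp, RingHom.comp_apply]
    have e2 : I.str.appTop.hom (I.one.appTop.hom s) = I.str.appTop (I.one.appTop s) := rfl
    erw [e1, e1]
    have hp0 := charZero_of_over p I.str
    have := (powHom Γ(I.carrier, ⊤) p hp0 (m+1)).map_sub s (I.str.appTop (I.one.appTop s))
    simp only [powHom_apply] at this
    rw [hker] at this
    · exact sub_eq_zero.mp this.symm
    · rw [map_sub, sub_eq_zero]
      have := congr(($(I.one_str)).appTop (I.one.appTop s))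
      simp only [Scheme.Hom.comp_appTop, Scheme.Hom.id_appTop] at this
      exact this.symm
  have hw : (frobSpec k p (m+1) ≫ I.one) ≫ I.str = 𝟙 _ ≫ frobSpec k p (m+1) := by
    rw [Category.assoc, I.one_str, Category.comp_id, Category.id_comp]
  refine ⟨FD.is_pullback.lift _ _ hw, FD.is_pullback.lift_fst _ _ hw,
    FD.is_pullback.lift_snd _ _ hw, ?_⟩
  apply FD.is_pullback.hom_ext
  · rw [FD.rel_pr, Category.assoc, FD.is_pullback.lift_fst, habs]
  · rw [FD.rel_str, Category.assoc, FD.is_pullback.lift_snd, Category.comp_id]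


/-- restriction of a ring homomorphism to equalizer subrings -/
def eqLocusMap {A A' C C' : Type u} [CommRing A] [CommRing A'] [CommRing C] [CommRing C']
    (a0 p0 : A →+* C) (a1 p1 : A' →+* C') (l : A →+* A') (l' : C →+* C')
    (ha : a1.comp l = l'.comp a0) (hp : p1.comp l = l'.comp p0) :
    a0.eqLocus p0 →+* a1.eqLocus p1 :=
  l.restrict _ _ fun x hx => by
    have h1 := congr($ha x)
    have h2 := congr($hp x)
    have hx' : a0 x = p0 x := hx
    change a1 (l x) = p1 (l x)
    simp only [RingHom.comp_apply] at h1 h2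
    rw [h1, h2, hx']

theorem eqLocus_localization {A A' C C' : Type u} [CommRing A] [CommRing A'] [CommRing C]
    [CommRing C']
    (a0 p0 : A →+* C) (a1 p1 : A' →+* C') (l : A →+* A') (l' : C →+* C')
    (ha : a1.comp l = l'.comp a0) (hp : p1.comp l = l'.comp p0)
    (t : A) (ht : a0 t = p0 t)
    (h1 : letI := l.toAlgebra; IsLocalization.Away t A')
    (h2 : letI := l'.toAlgebra; IsLocalization.Away (p0 t) C') :
    letI := (eqLocusMap a0 p0 a1 p1 l l' ha hp).toAlgebra
    IsLocalization.Away (⟨t, ht⟩ : a0.eqLocus p0) (a1.eqLocus p1) := by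
  let := l.toAlgebra
  let := l'.toAlgebra
  let inst := (eqLocusMap a0 p0 a1 p1 l l' ha hp).toAlgebra
  have hal : ∀ x : a0.eqLocus p0, ((algebraMap _ (a1.eqLocus p1) x : a1.eqLocus p1) : A') = l x :=
    fun x => rfl
  have haa : ∀ x, a1 (l x) = l' (a0 x) := fun x => congr($ha x)
  have hpp : ∀ x, p1 (l x) = l' (p0 x) := fun x => congr($hp x)
  have h1' : IsLocalization (Submonoid.powers t) A' := h1
  have h2' : IsLocalization (Submonoid.powers (p0 t)) C' := h2
  refine (?_ : IsLocalization (Submonoid.powers (⟨t, ht⟩ : a0.eqLocus p0)) (a1.eqLocus p1))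
  refine ⟨?_, ?_, ?_⟩
  · rintro ⟨y, n, rfl⟩
    have hu : IsUnit (l t) := IsLocalization.map_units (M := Submonoid.powers t) A' ⟨t, 1, by simp⟩
    obtain ⟨v, hv⟩ := hu
    have hv' : a1 (v⁻¹ : A'ˣ) = p1 (v⁻¹ : A'ˣ) := by
      have e1 : a1 v = p1 v := by rw [hv, haa, hpp, ht]
      have e2 : Units.map a1.toMonoidHom v = Units.map p1.toMonoidHom v := Units.ext e1
      have e3 := congr((($e2)⁻¹ : C'ˣ))
      rw [← map_inv, ← map_inv] at e3
      exact congr(($e3 : C'))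
    have : IsUnit (algebraMap _ (a1.eqLocus p1) (⟨t, ht⟩ : a0.eqLocus p0)) := by
      refine IsUnit.of_mul_eq_one ⟨(v⁻¹ : A'ˣ), hv'⟩ (Subtype.ext ?_)
      change l t * (v⁻¹ : A'ˣ) = 1
      rw [← hv]; simp
    simpa using this.pow n
  · rintro ⟨s, hs⟩
    have hs' : a1 s = p1 s := hs
    obtain ⟨⟨s0, ⟨_, n, rfl⟩⟩, e⟩ := IsLocalization.surj (Submonoid.powers t) s
    change s * l (t ^ n) = l s0 at e
    have : l' (a0 s0) = l' (p0 s0) := by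
      rw [← haa, ← hpp, ← e, map_mul, map_mul, hs', haa, hpp]; simp only [map_pow, ht]
    obtain ⟨⟨_, m, rfl⟩, hm⟩ := IsLocalization.exists_of_eq (M := Submonoid.powers (p0 t)) (S := C') (x := a0 s0) (y := p0 s0) this
    simp only at hm
    refine ⟨⟨⟨t ^ m * s0, ?_⟩, ⟨⟨t, ht⟩ ^ (n + m), n + m, rfl⟩⟩, Subtype.ext ?_⟩
    · change a0 _ = p0 _
      rw [map_mul, map_mul, map_pow, ht, hm, map_pow]
    · change s * l ((⟨t, ht⟩ ^ (n + m) : a0.eqLocus p0) : A) = l (t ^ m * s0)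
      rw [SubmonoidClass.coe_pow, pow_add, map_mul, ← mul_assoc, e, map_mul, mul_comm]
  · rintro ⟨x, hx⟩ ⟨y, hy⟩ e
    have e' : l x = l y := congr(($e).1)
    obtain ⟨⟨_, m, rfl⟩, hm⟩ := IsLocalization.exists_of_eq (M := Submonoid.powers t) (S := A') (x := x) (y := y) e'
    refine ⟨⟨⟨t, ht⟩ ^ m, m, rfl⟩, Subtype.ext ?_⟩
    simpa using hm


namespace QD
open Scheme.AffineZariskiSite

variable {P X Y : Scheme.{u}} (a p : P ⟶ X) (f : X ⟶ Y) (h : a ≫ f = p ≫ f)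

theorem leA {P X Y : Scheme.{u}} (a p : P ⟶ X) (f : X ⟶ Y) (h : a ≫ f = p ≫ f) (U : Y.Opens) : p ⁻¹ᵁ f ⁻¹ᵁ U ≤ a ⁻¹ᵁ f ⁻¹ᵁ U := by
  rw [← Scheme.Hom.comp_preimage, ← Scheme.Hom.comp_preimage, h]

abbrev B (U : Y.Opens) : Subring Γ(X, f ⁻¹ᵁ U) :=
  (a.appLE (f ⁻¹ᵁ U) (p ⁻¹ᵁ f ⁻¹ᵁ U) (leA a p f h U)).hom.eqLocus (p.app (f ⁻¹ᵁ U)).hom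

abbrev resX {U V : Y.Opens} (i : U ≤ V) : Γ(X, f ⁻¹ᵁ V) ⟶ Γ(X, f ⁻¹ᵁ U) :=
  X.presheaf.map (homOfLE (f.preimage_mono i)).op

abbrev resP {U V : Y.Opens} (i : U ≤ V) : Γ(P, p ⁻¹ᵁ f ⁻¹ᵁ V) ⟶ Γ(P, p ⁻¹ᵁ f ⁻¹ᵁ U) :=
  P.presheaf.map (homOfLE (p.preimage_mono (f.preimage_mono i))).op

theorem res_a {U V : Y.Opens} (i : U ≤ V) :
    (a.appLE (f ⁻¹ᵁ U) (p ⁻¹ᵁ f ⁻¹ᵁ U) (leA a p f h U)).hom.comp (resX f i).hom =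
      (resP p f i).hom.comp (a.appLE (f ⁻¹ᵁ V) (p ⁻¹ᵁ f ⁻¹ᵁ V) (leA a p f h V)).hom := by
  rw [← CommRingCat.hom_comp, ← CommRingCat.hom_comp, Scheme.Hom.map_appLE, Scheme.Hom.appLE_map]

theorem res_p {U V : Y.Opens} (i : U ≤ V) :
    (p.app (f ⁻¹ᵁ U)).hom.comp (resX f i).hom =
      (resP p f i).hom.comp (p.app (f ⁻¹ᵁ V)).hom := by
  rw [← CommRingCat.hom_comp, ← CommRingCat.hom_comp, Scheme.Hom.app_eq_appLE,
    Scheme.Hom.app_eq_appLE, Scheme.Hom.map_appLE, Scheme.Hom.appLE_map]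

def resB {U V : Y.Opens} (i : U ≤ V) : B a p f h V →+* B a p f h U :=
  eqLocusMap _ _ _ _ (resX f i).hom (resP p f i).hom (res_a a p f h i) (res_p p f i)

theorem resB_coe {U V : Y.Opens} (i : U ≤ V) (x : B a p f h V) :
    (resB a p f h i x : Γ(X, f ⁻¹ᵁ U)) = resX f i x := rfl

/-- The presheaf of invariants. -/
def diag : Y.Opensᵒᵖ ⥤ CommRingCat.{u} where
  obj U := .of (B a p f h U.unop)
  map {V U} i := CommRingCat.ofHom (resB a p f h i.unop.le)
  map_id U := by
    ext x
    change X.presheaf.map (𝟙 _) x.1 = x.1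
    rw [CategoryTheory.Functor.map_id]; rfl
  map_comp {U V W} i j := by
    ext x
    change resX f _ x.1 = resX f j.unop.le (resX f i.unop.le x.1)
    rw [← CommRingCat.comp_apply, ← Functor.map_comp]; rfl

theorem mem_B (U : Y.Opens) (s : Γ(Y, U)) : f.app U s ∈ B a p f h U := by
  change a.appLE _ _ _ (f.app U s) = p.app _ (f.app U s)
  rw [← CommRingCat.comp_apply, ← CommRingCat.comp_apply, Scheme.Hom.app_eq_appLE,
    Scheme.Hom.appLE_comp_appLE, Scheme.Hom.app_eq_appLE, Scheme.Hom.appLE_comp_appLE]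
  simp only [h]

def toB (U : Y.Opens) : Γ(Y, U) →+* B a p f h U :=
  (f.app U).hom.codRestrict _ (mem_B a p f h U)

def diagMap : Y.presheaf ⟶ diag a p f h where
  app U := CommRingCat.ofHom (toB a p f h U.unop)
  naturality {U V} i := by ext x; exact Subtype.ext congr($(f.naturality i) x)

theorem loc_res {X Y : Scheme.{u}} (f : X ⟶ Y) [QuasiCompact f] [QuasiSeparated f] {U : Y.Opens}
    (hU : IsAffineOpen U) (r : Γ(Y, U)) :
    letI := (X.presheaf.map (homOfLE (f.preimage_mono (Y.basicOpen_le r))).op).hom.toAlgebra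
    IsLocalization.Away (f.app U r) Γ(X, f ⁻¹ᵁ Y.basicOpen r) := by
  have key : ∀ (V : X.Opens) (hV : V = X.basicOpen (f.app U r)) (hV' : V ≤ f ⁻¹ᵁ U),
    letI := (X.presheaf.map (homOfLE hV').op).hom.toAlgebra
    IsLocalization.Away (f.app U r) Γ(X, V) := by
    rintro _ rfl hV'
    exact isLocalization_basicOpen_of_qcqs (f.isCompact_preimage hU.isCompact)
        (f.isQuasiSeparated_preimage hU.isQuasiSeparated) (f.app _ r)
  exact key _ (f.preimage_basicOpen r) _

variable [QuasiCompact f] [QuasiSeparated f] [QuasiCompact p] [QuasiSeparated p]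

theorem coeq : ((toOpensFunctor Y).op.whiskerLeft (diagMap a p f h)).Coequifibered := by
  refine coequifibered_iff_forall_isLocalizationAway.mpr fun U r ↦ ?_
  refine eqLocus_localization _ _ _ _ (resX f (Y.basicOpen_le r)).hom (resP p f (Y.basicOpen_le r)).hom
    (res_a a p f h _) (res_p p f _) (f.app U.1 r) (mem_B a p f h U.1 r) ?_ ?_
  · exact loc_res f U.2 r
  · have := loc_res (p ≫ f) U.2 r
    rw [Scheme.Hom.comp_app] at this
    exact this

def glueData := relativeGluingData (coeq a p f h)

instance : ((glueData a p f h).functor ⋙ Scheme.forget).IsLocallyDirected :=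
  Scheme.Cover.RelativeGluingData.instIsLocallyDirectedI₀CompFunctorForgetOfIsThin ..

def Q : Scheme.{u} := (glueData a p f h).glued

def cov : (Q a p f h).OpenCover := (glueData a p f h).cover

def toBase : Q a p f h ⟶ Y := (glueData a p f h).toBase

def covf (U : Y.affineOpens) : Spec (.of (B a p f h U.1)) ⟶ Q a p f h :=
  (cov a p f h).f U

instance (U : Y.affineOpens) : IsOpenImmersion (covf a p f h U) :=
  (cov a p f h).map_prop U

theorem covf_toBase (U : Y.affineOpens) :
    covf a p f h U ≫ toBase a p f h =
      Spec.map (CommRingCat.ofHom (toB a p f h U.1)) ≫ U.2.fromSpec :=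
  colimit.ι_desc _ _

theorem toBase_preimage (U : Y.affineOpens) :
    toBase a p f h ⁻¹ᵁ U = (covf a p f h U).opensRange := by
  have := (glueData a p f h).toBase_preimage_eq_opensRange_ι U
  simp at this
  exact this

theorem covf_trans {U V : Y.AffineZariskiSite} (i : U ⟶ V) :
    Spec.map (CommRingCat.ofHom (resB a p f h (toOpens_mono i.le))) ≫ covf a p f h V =
    covf a p f h U :=
  colimit.w (glueData a p f h).functor i

end QD


namespace QD
open Scheme.AffineZariskiSite

variable {P X Y : Scheme.{u}} (a p : P ⟶ X) (f : X ⟶ Y) (h : a ≫ f = p ≫ f)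
variable [QuasiCompact f] [QuasiSeparated f] [QuasiCompact p] [QuasiSeparated p]

def locMap (U : Y.affineOpens) : (f ⁻¹ᵁ U.1).toScheme ⟶ Q a p f h :=
  (f ⁻¹ᵁ U.1).toSpecΓ ≫ Spec.map (CommRingCat.ofHom (B a p f h U.1).subtype) ≫ covf a p f h U

theorem locMap_trans {U V : Y.AffineZariskiSite} (i : U ⟶ V) :
    X.homOfLE (f.preimage_mono (toOpens_mono i.le)) ≫ locMap a p f h V = locMap a p f h U := by
  unfold locMap
  rw [← Scheme.Opens.toSpecΓ_SpecMap_presheaf_map_assoc, ← covf_trans a p f h i]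
  rw [← Spec.map_comp_assoc, ← Spec.map_comp_assoc]
  rfl

theorem exists_toQ : ∃ φ : X ⟶ Q a p f h, ∀ U : Y.affineOpens,
    (f ⁻¹ᵁ U.1).ι ≫ φ = locMap a p f h U := by
  let 𝒰 : X.OpenCover := (directedCover Y).pullback₁ f
  have H : ∀ {U V : Y.AffineZariskiSite} (i : U ⟶ V),
     Scheme.Cover.trans ((directedCover Y).pullback₁ f) i ≫ (pullbackRestrictIsoRestrict f V.1).hom ≫ locMap a p f h V =
      (pullbackRestrictIsoRestrict f U.1).hom ≫ locMap a p f h U := by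
    intro U V i
    have key : ∀ tr : pullback f U.1.ι ⟶ pullback f V.1.ι,
        tr ≫ pullback.fst f V.1.ι = pullback.fst f U.1.ι →
        tr ≫ (pullbackRestrictIsoRestrict f V.1).hom ≫ locMap a p f h V =
        (pullbackRestrictIsoRestrict f U.1).hom ≫ locMap a p f h U := by
      intro tr htr
      rw [← Iso.inv_comp_eq, ← locMap_trans a p f h i]
      have : (pullbackRestrictIsoRestrict f U.1).inv ≫ tr ≫
          (pullbackRestrictIsoRestrict f V.1).hom = X.homOfLE
            (f.preimage_mono (toOpens_mono i.1.1)) := by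
        rw [← cancel_mono (Scheme.Opens.ι _)]
        rw [Category.assoc, Category.assoc, pullbackRestrictIsoRestrict_hom_ι, htr,
          pullbackRestrictIsoRestrict_inv_fst, Scheme.homOfLE_ι]
      rw [reassoc_of% this]
    exact key _ (Scheme.Cover.trans_map ((directedCover Y).pullback₁ f) i)
  refine ⟨Scheme.OpenCover.glueMorphismsOfLocallyDirected ((directedCover Y).pullback₁ f)
    (fun U => (pullbackRestrictIsoRestrict f U.1).hom ≫ locMap a p f h U) H, fun U => ?_⟩
  rw [← cancel_epi (pullbackRestrictIsoRestrict f U.1).hom, ← Category.assoc,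
    pullbackRestrictIsoRestrict_hom_ι]
  exact Scheme.OpenCover.map_glueMorphismsOfLocallyDirected ((directedCover Y).pullback₁ f) _ H U

end QD


namespace QD
open Scheme.AffineZariskiSite

variable {P X Y : Scheme.{u}} (a p : P ⟶ X) (f : X ⟶ Y) (h : a ≫ f = p ≫ f)
variable [QuasiCompact f] [QuasiSeparated f] [QuasiCompact p] [QuasiSeparated p]

instance : IsAffineHom (toBase a p f h) :=
  ⟨fun U hU => by
    rw [toBase_preimage a p f h ⟨U, hU⟩]
    exact isAffineOpen_opensRange _⟩

theorem toQ_toBase (φ : X ⟶ Q a p f h)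
    (hφ : ∀ U : Y.affineOpens, (f ⁻¹ᵁ U.1).ι ≫ φ = locMap a p f h U) :
    φ ≫ toBase a p f h = f := by
  have key : ∀ U : Y.affineOpens,
      (f ⁻¹ᵁ U.1).ι ≫ φ ≫ toBase a p f h = (f ⁻¹ᵁ U.1).ι ≫ f := by
    intro U
    rw [← Category.assoc, hφ, locMap, Category.assoc, Category.assoc, covf_toBase,
      ← Spec.map_comp_assoc]
    change (f ⁻¹ᵁ U.1).toSpecΓ ≫ Spec.map (f.app _) ≫ U.2.fromSpec = (f ⁻¹ᵁ U.1).ι ≫ _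
    simp
    have := IsAffineOpen.toSpecΓ_fromSpec (U := U.1) U.2
    rw [this, morphismRestrict_ι]
  exact Scheme.Cover.hom_ext (X.openCoverOfIsOpenCover (fun U : Y.affineOpens => f ⁻¹ᵁ U.1)
    (.comap (iSup_affineOpens_eq_top Y) f.base.1)) _ _ fun U ↦ key U

theorem specApp {R S : CommRingCat.{u}} (g : R ⟶ S) (hg) :
    (Spec.map g).appLE ⊤ ⊤ hg ≫ (Scheme.ΓSpecIso S).hom = (Scheme.ΓSpecIso R).hom ≫ g := by
  rw [← Scheme.ΓSpecIso_naturality]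
  congr 1

theorem covf_iso (U : Y.affineOpens) (hh : ⊤ ≤ covf a p f h U ⁻¹ᵁ toBase a p f h ⁻¹ᵁ U.1) :
    IsIso ((covf a p f h U).appLE (toBase a p f h ⁻¹ᵁ U.1) ⊤ hh) := by
  have : IsIso ((covf a p f h U).app (toBase a p f h ⁻¹ᵁ U.1)) :=
    Scheme.Hom.isIso_app _ _ (by rw [toBase_preimage])
  rw [Scheme.Hom.appLE]
  have e : ⊤ = covf a p f h U ⁻¹ᵁ toBase a p f h ⁻¹ᵁ U.1 := le_antisymm hh le_top
  have : IsIso (homOfLE hh) := ⟨homOfLE e.ge, Subsingleton.elim _ _, Subsingleton.elim _ _⟩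
  infer_instance

theorem toQ_appLE (φ : X ⟶ Q a p f h)
    (hφ : ∀ U : Y.affineOpens, (f ⁻¹ᵁ U.1).ι ≫ φ = locMap a p f h U) (U : Y.affineOpens)
    (hle : f ⁻¹ᵁ U.1 ≤ φ ⁻¹ᵁ toBase a p f h ⁻¹ᵁ U.1) :
    ∃ e : Γ(Q a p f h, toBase a p f h ⁻¹ᵁ U.1) ≅ .of (B a p f h U.1),
      φ.appLE (toBase a p f h ⁻¹ᵁ U.1) (f ⁻¹ᵁ U.1) hle =
        e.hom ≫ CommRingCat.ofHom (B a p f h U.1).subtype := by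
  have hh : ⊤ ≤ covf a p f h U ⁻¹ᵁ toBase a p f h ⁻¹ᵁ U.1 := by
    rw [toBase_preimage]; simp
  have := covf_iso a p f h U hh
  refine ⟨asIso ((covf a p f h U).appLE (toBase a p f h ⁻¹ᵁ U.1) ⊤ hh) ≪≫ Scheme.ΓSpecIso _, ?_⟩
  have hι : (⊤ : (f ⁻¹ᵁ U.1).toScheme.Opens) ≤ (f ⁻¹ᵁ U.1).ι ⁻¹ᵁ f ⁻¹ᵁ U.1 := by simp
  have e1 : ((f ⁻¹ᵁ U.1).ι ≫ φ).appLE (toBase a p f h ⁻¹ᵁ U.1) ⊤ (hι.trans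
      (Scheme.Hom.preimage_mono _ hle)) =
      (locMap a p f h U).appLE (toBase a p f h ⁻¹ᵁ U.1) ⊤ (by
        rw [← hφ]; exact (hι.trans (Scheme.Hom.preimage_mono _ hle))) := by
    simp only [hφ]
  rw [← Scheme.Hom.appLE_comp_appLE _ _ _ (f ⁻¹ᵁ U.1) _ hle hι] at e1
  have e2 : (f ⁻¹ᵁ U.1).ι.appLE (f ⁻¹ᵁ U.1) ⊤ hι = (f ⁻¹ᵁ U.1).topIso.inv := by
    simp [Scheme.Hom.appLE]
    exact (Functor.map_comp _ _ _).symm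
  rw [e2] at e1
  unfold locMap at e1
  rw [← Scheme.Hom.appLE_comp_appLE _ _ _ ⊤ ⊤ (by
    exact (Scheme.Hom.preimage_mono _ hh)) le_rfl,
    ← Scheme.Hom.appLE_comp_appLE _ _ _ ⊤ ⊤ hh le_rfl] at e1
  have e3 : (f ⁻¹ᵁ U.1).toSpecΓ.appLE ⊤ ⊤ le_rfl = (Scheme.ΓSpecIso _).hom ≫ (f ⁻¹ᵁ U.1).topIso.inv := by
    rw [← Scheme.Opens.toSpecΓ_appTop]
    exact (Scheme.Hom.app_eq_appLE _).symm
  rw [e3] at e1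
  rw [← cancel_mono (f ⁻¹ᵁ U.1).topIso.inv]
  refine e1.trans ?_
  have e4 := specApp (R := .of (B a p f h U.1)) (S := Γ(X, f ⁻¹ᵁ U.1))
    (CommRingCat.ofHom (B a p f h U.1).subtype) le_rfl
  have e5 := congr((covf a p f h U).appLE (toBase a p f h ⁻¹ᵁ U.1) ⊤ hh ≫ $e4 ≫
    (f ⁻¹ᵁ U.1).topIso.inv)
  simp only [Category.assoc] at e5
  refine e5.trans ?_
  simp
  rfl
end QD

theorem exists_invariants {P X Y : Scheme.{u}} (a p : P ⟶ X) (f : X ⟶ Y) (h : a ≫ f = p ≫ f)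
    [QuasiCompact f] [QuasiSeparated f] [QuasiCompact p] [QuasiSeparated p] :
    ∃ (Q : Scheme.{u}) (φ : X ⟶ Q) (π : Q ⟶ Y), φ ≫ π = f ∧ IsAffineHom π ∧
      ∀ (U : Y.Opens) (_ : IsAffineOpen U) (hle : f ⁻¹ᵁ U ≤ φ ⁻¹ᵁ π ⁻¹ᵁ U),
        Function.Injective (φ.appLE (π ⁻¹ᵁ U) (f ⁻¹ᵁ U) hle) ∧
        ∀ s : Γ(X, f ⁻¹ᵁ U), a.appLE (f ⁻¹ᵁ U) (p ⁻¹ᵁ f ⁻¹ᵁ U) (QD.leA a p f h U) s =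
          p.app (f ⁻¹ᵁ U) s ↔ ∃ t, φ.appLE (π ⁻¹ᵁ U) (f ⁻¹ᵁ U) hle t = s := by
  obtain ⟨φ, hφ⟩ := QD.exists_toQ a p f h
  refine ⟨QD.Q a p f h, φ, QD.toBase a p f h, QD.toQ_toBase a p f h φ hφ, inferInstance, ?_⟩
  intro U hU hle
  obtain ⟨e, he⟩ := QD.toQ_appLE a p f h φ hφ ⟨U, hU⟩ hle
  have hb : Function.Bijective e.hom := ConcreteCategory.bijective_of_isIso e.hom
  have hx : ∀ t, φ.appLE (QD.toBase a p f h ⁻¹ᵁ U) (f ⁻¹ᵁ U) hle t =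
      ((show QD.B a p f h U from e.hom t) : Γ(X, f ⁻¹ᵁ U)) := fun t => congr($he t)
  constructor
  · intro s t hst
    rw [hx, hx] at hst
    exact hb.1 (Subtype.ext hst)
  · intro s
    constructor
    · intro hs
      obtain ⟨t, ht⟩ := hb.2 (⟨s, hs⟩ : QD.B a p f h U)
      exact ⟨t, by rw [hx, ht]⟩
    · rintro ⟨t, rfl⟩
      rw [hx]
      exact (show QD.B a p f h U from e.hom t).2


/-- The properties of the pair `(φ, π)` used below, in terms of sections over affine opens. -/
structure InvData {P X Q Y : Scheme.{u}} (a p : P ⟶ X) (φ : X ⟶ Q) (π : Q ⟶ Y) : Prop where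
  h : a ≫ φ ≫ π = p ≫ φ ≫ π
  inj : ∀ (U : Y.Opens), IsAffineOpen U → Function.Injective (φ.app (π ⁻¹ᵁ U))
  inv : ∀ (U : Y.Opens), IsAffineOpen U → ∀ (hle : p ⁻¹ᵁ φ ⁻¹ᵁ π ⁻¹ᵁ U ≤ a ⁻¹ᵁ φ ⁻¹ᵁ π ⁻¹ᵁ U)
    (s : Γ(X, φ ⁻¹ᵁ π ⁻¹ᵁ U)),
    a.appLE (φ ⁻¹ᵁ π ⁻¹ᵁ U) (p ⁻¹ᵁ φ ⁻¹ᵁ π ⁻¹ᵁ U) hle s = p.app (φ ⁻¹ᵁ π ⁻¹ᵁ U) s ↔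
      ∃ t, φ.app (π ⁻¹ᵁ U) t = s

theorem exists_invData {P X Y : Scheme.{u}} (a p : P ⟶ X) (f : X ⟶ Y) (h : a ≫ f = p ≫ f)
    [QuasiCompact f] [QuasiSeparated f] [QuasiCompact p] [QuasiSeparated p] :
    ∃ (Q : Scheme.{u}) (φ : X ⟶ Q) (π : Q ⟶ Y), φ ≫ π = f ∧ IsAffineHom π ∧
      InvData a p φ π := by
  obtain ⟨Q, φ, π, hf, hπ, H⟩ := exists_invariants a p f h
  subst hf
  refine ⟨Q, φ, π, rfl, hπ, h, fun U hU => ?_, fun U hU hle s => ?_⟩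
  · have := (H U hU le_rfl).1
    have e := Scheme.Hom.app_eq_appLE φ (U := π ⁻¹ᵁ U)
    rw [e]
    exact this
  · have := (H U hU le_rfl).2 s
    have e := Scheme.Hom.app_eq_appLE φ (U := π ⁻¹ᵁ U)
    rw [e]
    exact this

namespace InvData
variable {P X Q Y : Scheme.{u}} {a p : P ⟶ X} {φ : X ⟶ Q} {π : Q ⟶ Y} (D : InvData a p φ π)

theorem iSup_pre (f : X ⟶ Y) : ⨆ U : Y.affineOpens, f ⁻¹ᵁ U.1 = ⊤ := by
  rw [← Scheme.Hom.preimage_iSup, iSup_affineOpens_eq_top]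
  rfl

theorem std (D : InvData a p φ π) [IsAffineHom π] [QuasiCompact φ] :
    IsSchemeTheoreticallyDominant φ := by
  constructor
  refine Scheme.IdealSheafData.ext_of_iSup_eq_top
    (fun U : Y.affineOpens ↦ ⟨π ⁻¹ᵁ U.1, IsAffineHom.isAffine_preimage _ U.2⟩) (iSup_pre π) ?_
  intro U
  rw [Scheme.Hom.ker_apply, (RingHom.injective_iff_ker_eq_bot _).mp (D.inj U.1 U.2)]
  simp

theorem finite_π (D : InvData a p φ π) [IsAffineHom π] [IsLocallyNoetherian Y]
    [IsFinite (φ ≫ π)] : IsFinite π := by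
  refine ⟨fun U hU => ?_⟩
  have h1 : ((φ ≫ π).app U).hom.Finite := IsFinite.finite_app (φ ≫ π) U hU
  have hN : IsNoetherianRing Γ(Y, U) := IsLocallyNoetherian.component_noetherian ⟨U, hU⟩
  have hi := D.inj U hU
  have e : (φ ≫ π).app U = π.app U ≫ φ.app (π ⁻¹ᵁ U) := Scheme.Hom.comp_app _ _ _
  rw [e] at h1
  have key : ∀ {A B C : Type u} [CommRing A] [CommRing B] [CommRing C] [IsNoetherianRing A]
      (i : A →+* B) (j : B →+* C), Function.Injective j → (j.comp i).Finite → i.Finite := by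
    intro A B C _ _ _ _ i j hj hf
    algebraize [i, j.comp i]
    let j' : B →ₗ[A] C := { toFun := j, map_add' := map_add j, map_smul' := fun a b => by
                              simp [Algebra.smul_def, RingHom.algebraMap_toAlgebra] }
    exact Module.Finite.of_injective j' hj
  exact key _ _ hi h1

theorem surj_φ (D : InvData a p φ π) [IsAffineHom π] [IsFinite φ] :
    AlgebraicGeometry.Surjective φ := by
  have := D.std
  have h1 : IsDominant φ := inferInstance
  have h2 : IsClosed (Set.range φ) := φ.isClosedMap.isClosed_range
  refine ⟨fun x => ?_⟩
  have := h1.1 x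
  rw [h2.closure_eq] at this
  exact this

theorem epi_bc (D : InvData a p φ π) [IsAffineHom π] [IsFinite φ] {W : Scheme.{u}} (g : W ⟶ Q)
    [IsOpenImmersion g] : Epi (pullback.snd φ g) := by
  have := D.std
  have := D.surj_φ
  exact epi_of_surj_inj _ (pullback.snd φ g).surjective (Scheme.Hom.app_injective _)

theorem epi (D : InvData a p φ π) [IsAffineHom π] [IsFinite φ] : Epi φ := by
  have := D.std
  have := D.surj_φ
  exact epi_of_surj_inj _ φ.surjective (Scheme.Hom.app_injective _)

theorem ι_eq {X Z : Scheme.{u}} (u : X ⟶ Z) {V : X.Opens} {W : Z.Opens} (hV : IsAffineOpen V)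
    (hW : IsAffineOpen W) (hle : V ≤ u ⁻¹ᵁ W) :
    V.toSpecΓ ≫ Spec.map (u.appLE W V hle) ≫ hW.fromSpec = V.ι ≫ u := by
  rw [IsAffineOpen.SpecMap_appLE_fromSpec u hW hV, ← Category.assoc, hV.toSpecΓ_fromSpec]

theorem le (D : InvData a p φ π) (U : Y.Opens) :
    p ⁻¹ᵁ φ ⁻¹ᵁ π ⁻¹ᵁ U ≤ a ⁻¹ᵁ φ ⁻¹ᵁ π ⁻¹ᵁ U := by
  change (p ≫ φ ≫ π) ⁻¹ᵁ U ≤ (a ≫ φ ≫ π) ⁻¹ᵁ U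
  rw [D.h]

theorem invt (D : InvData a p φ π) [IsAffineHom π] [IsFinite φ] [IsAffineHom p] :
    a ≫ φ = p ≫ φ := by
  have key : ∀ U : Y.affineOpens, (p ⁻¹ᵁ φ ⁻¹ᵁ π ⁻¹ᵁ U.1).ι ≫ a ≫ φ =
      (p ⁻¹ᵁ φ ⁻¹ᵁ π ⁻¹ᵁ U.1).ι ≫ p ≫ φ := by
    intro U
    have h1 : IsAffineOpen (π ⁻¹ᵁ U.1) := IsAffineHom.isAffine_preimage _ U.2
    have h2 : IsAffineOpen (φ ⁻¹ᵁ π ⁻¹ᵁ U.1) := IsAffineHom.isAffine_preimage _ h1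
    have h3 : IsAffineOpen (p ⁻¹ᵁ φ ⁻¹ᵁ π ⁻¹ᵁ U.1) := IsAffineHom.isAffine_preimage _ h2
    rw [← ι_eq (a ≫ φ) h3 h1 (D.le U.1), ← ι_eq (p ≫ φ) h3 h1 le_rfl]
    congr 3
    rw [← Scheme.Hom.appLE_comp_appLE a φ (π ⁻¹ᵁ U.1) (φ ⁻¹ᵁ π ⁻¹ᵁ U.1) _ le_rfl (D.le U.1),
      ← Scheme.Hom.appLE_comp_appLE p φ (π ⁻¹ᵁ U.1) (φ ⁻¹ᵁ π ⁻¹ᵁ U.1) _ le_rfl le_rfl]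
    rw [← Scheme.Hom.app_eq_appLE φ, ← Scheme.Hom.app_eq_appLE p]
    ext t
    exact (D.inv U.1 U.2 (D.le U.1) _).mpr ⟨t, rfl⟩
  exact Scheme.Cover.hom_ext (P.openCoverOfIsOpenCover
    (fun U : Y.affineOpens => p ⁻¹ᵁ φ ⁻¹ᵁ π ⁻¹ᵁ U.1) (iSup_pre (p ≫ φ ≫ π))) _ _ fun U ↦ key U

theorem local_desc (D : InvData a p φ π) [IsAffineHom π] [IsFinite φ] {Z : Scheme.{u}}
    (u : X ⟶ Z) (hu : a ≫ u = p ≫ u) (U : Y.Opens) (hU : IsAffineOpen U) (W : Z.Opens)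
    (hW : IsAffineOpen W) (hle : φ ⁻¹ᵁ π ⁻¹ᵁ U ≤ u ⁻¹ᵁ W) :
    ∃ v : (π ⁻¹ᵁ U).toScheme ⟶ Z, ∀ {T : Scheme.{u}} (t : T ⟶ X) (s : T ⟶ (π ⁻¹ᵁ U).toScheme),
      t ≫ φ = s ≫ (π ⁻¹ᵁ U).ι → s ≫ v = t ≫ u := by
  have h1 : IsAffineOpen (π ⁻¹ᵁ U) := IsAffineHom.isAffine_preimage _ hU
  have h2 : IsAffineOpen (φ ⁻¹ᵁ π ⁻¹ᵁ U) := IsAffineHom.isAffine_preimage _ h1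
  have hr : ∀ z : Γ(Z, W), ∃ t, φ.app (π ⁻¹ᵁ U) t = u.appLE W (φ ⁻¹ᵁ π ⁻¹ᵁ U) hle z := by
    intro z
    refine (D.inv U hU (D.le U) _).mp ?_
    have e1 := Scheme.Hom.appLE_comp_appLE a u W (φ ⁻¹ᵁ π ⁻¹ᵁ U) _ hle (D.le U)
    have e2 := Scheme.Hom.appLE_comp_appLE p u W (φ ⁻¹ᵁ π ⁻¹ᵁ U) _ hle le_rfl
    rw [← Scheme.Hom.app_eq_appLE p] at e2
    have e3 : (a ≫ u).appLE W (p ⁻¹ᵁ φ ⁻¹ᵁ π ⁻¹ᵁ U)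
      ((D.le U).trans (Scheme.Hom.preimage_mono _ hle)) =
      (p ≫ u).appLE W (p ⁻¹ᵁ φ ⁻¹ᵁ π ⁻¹ᵁ U) (Scheme.Hom.preimage_mono _ hle) := by
      simp only [hu]
    exact congr($(e1.trans (e3.trans e2.symm)) z)
  choose c hc using hr
  have hi := D.inj U hU
  let γ : Γ(Z, W) ⟶ Γ(Q, π ⁻¹ᵁ U) := CommRingCat.ofHom
    { toFun := c
      map_one' := hi (by rw [hc, map_one, map_one])
      map_zero' := hi (by rw [hc, map_zero, map_zero])
      map_add' := fun x y => hi (by rw [hc, map_add, map_add, hc, hc])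
      map_mul' := fun x y => hi (by rw [hc, map_mul, map_mul, hc, hc]) }
  have hγ : γ ≫ φ.app (π ⁻¹ᵁ U) = u.appLE W (φ ⁻¹ᵁ π ⁻¹ᵁ U) hle := by
    ext z; exact hc z
  let v := (π ⁻¹ᵁ U).toSpecΓ ≫ Spec.map γ ≫ hW.fromSpec
  have hv : (φ ∣_ (π ⁻¹ᵁ U)) ≫ v = (φ ⁻¹ᵁ π ⁻¹ᵁ U).ι ≫ u := by
    rw [← ι_eq u h2 hW hle, ← hγ, Spec.map_comp]
    simp [v]
  refine ⟨v, fun {T} t s hts => ?_⟩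
  have pb := (isPullback_morphismRestrict φ (π ⁻¹ᵁ U))
  rw [← pb.lift_fst s t hts.symm, Category.assoc, hv, pb.lift_snd_assoc]

theorem exists_nbhd [IsFinite (φ ≫ π)] [UniversallyInjective (φ ≫ π)] {Z : Scheme.{u}}
    (u : X ⟶ Z) (x : X) : ∃ (U : Y.Opens) (W : Z.Opens), IsAffineOpen U ∧ IsAffineOpen W ∧
      φ ⁻¹ᵁ π ⁻¹ᵁ U ≤ u ⁻¹ᵁ W ∧ (φ ≫ π) x ∈ U := by
  obtain ⟨W, hW, hxW, -⟩ := exists_isAffineOpen_mem_and_subset (x := u x) (U := ⊤) trivial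
  have hc := (φ ≫ π).isClosedMap
  have hi := (φ ≫ π).injective
  let C : Set X := ((u ⁻¹ᵁ W : X.Opens) : Set X)ᶜ
  have hC : IsClosed C := (u ⁻¹ᵁ W).isOpen.isClosed_compl
  let N : Y.Opens := ⟨((φ ≫ π) '' C)ᶜ, (hc _ hC).isOpen_compl⟩
  obtain ⟨U, hU, hxU, hUN⟩ := exists_isAffineOpen_mem_and_subset (x := (φ ≫ π) x) (U := N) (by
    rintro ⟨y, hy, hyx⟩
    rw [hi hyx] at hy
    exact hy hxW)
  refine ⟨U, W, hU, hW, ?_, hxU⟩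
  intro y hy
  by_contra hn
  exact hUN hy ⟨y, hn, rfl⟩

theorem desc (D : InvData a p φ π) [IsAffineHom π] [IsFinite φ] [IsFinite (φ ≫ π)]
    [UniversallyInjective (φ ≫ π)] {Z : Scheme.{u}}
    (u : X ⟶ Z) (hu : a ≫ u = p ≫ u) : ∃! v : Q ⟶ Z, φ ≫ v = u := by
  have := D.surj_φ
  have := D.epi
  refine existsUnique_of_exists_of_unique ?_ (fun v w hv hw => by
    rw [← cancel_epi φ, hv, hw])
  choose U W hU hW hle hx using fun x => exists_nbhd (φ := φ) (π := π) u x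
  choose v hv using fun x => D.local_desc u hu (U x) (hU x) (W x) (hW x) (hle x)
  have hcov : ⨆ x, π ⁻¹ᵁ U x = ⊤ := by
    rw [eq_top_iff]
    rintro q -
    obtain ⟨x, rfl⟩ := φ.surjective q
    rw [TopologicalSpace.Opens.mem_iSup]
    exact ⟨x, hx x⟩
  let 𝒰 := Q.openCoverOfIsOpenCover _ hcov
  have hvv : ∀ x y, pullback.fst (π ⁻¹ᵁ U x).ι (π ⁻¹ᵁ U y).ι ≫ v x =
      pullback.snd (π ⁻¹ᵁ U x).ι (π ⁻¹ᵁ U y).ι ≫ v y := by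
    intro x y
    let g := pullback.fst (π ⁻¹ᵁ U x).ι (π ⁻¹ᵁ U y).ι ≫ (π ⁻¹ᵁ U x).ι
    have := D.epi_bc g
    rw [← cancel_epi (pullback.snd φ g), ← Category.assoc, ← Category.assoc,
      hv x (pullback.fst φ g) _ (by rw [pullback.condition, Category.assoc]),
      hv y (pullback.fst φ g) _ (by
        rw [pullback.condition, Category.assoc, ← pullback.condition (f := (π ⁻¹ᵁ U x).ι)])]
  refine ⟨𝒰.glueMorphisms v hvv, ?_⟩
  have h1 : ∀ x, (π ⁻¹ᵁ U x).ι ≫ 𝒰.glueMorphisms v hvv = v x := fun x =>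
    Scheme.Cover.ι_glueMorphisms 𝒰 v hvv x
  have h2 : ∀ x, (φ ⁻¹ᵁ π ⁻¹ᵁ U x).ι ≫ φ ≫ 𝒰.glueMorphisms v hvv =
      (φ ⁻¹ᵁ π ⁻¹ᵁ U x).ι ≫ u := by
    intro x
    rw [← hv x _ (φ ∣_ (π ⁻¹ᵁ U x)) (morphismRestrict_ι _ _).symm, ← h1,
      ← morphismRestrict_ι_assoc]
  have hcov' : ⨆ x, φ ⁻¹ᵁ π ⁻¹ᵁ U x = ⊤ := by
    rw [← Scheme.Hom.preimage_iSup, hcov]; rfl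
  exact Scheme.Cover.hom_ext (X.openCoverOfIsOpenCover _ hcov') _ _ fun x => h2 x

end InvData


theorem quotient_main {k : Type u} [Field k] (p : ℕ) [Fact p.Prime] [CharP k p]
    (I : GroupSchemeOver k) (hI : I.IsInfinitesimal)
    (X : SchemeOver k) (hXft : X.IsFiniteType) (α : ActionOver I X)
    (n : ℕ) (hn : FrobKillsAt k p I n) (FD : FrobeniusData k p n X) :
    ∃ (Q : SchemeOver k) (φ : X.carrier ⟶ Q.carrier) (π : Q.carrier ⟶ FD.tw.carrier),
      IsCatQuotient α Q φ ∧ Q.IsFiniteType ∧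
      (IsFinite φ ∧ AlgebraicGeometry.Surjective φ ∧ UniversallyInjective φ) ∧ φ ≫ π = FD.rel ∧
      (IsFinite π ∧ AlgebraicGeometry.Surjective π ∧ UniversallyInjective π) := by
  have hfin : IsFinite I.str := hI.2.1
  let pr : pullback I.str X.str ⟶ X.carrier := pullback.snd I.str X.str
  let a : pullback I.str X.str ⟶ X.carrier :=
    α.act (pullback.fst I.str X.str) (pullback.snd I.str X.str) pullback.condition
  have h : a ≫ FD.rel = pr ≫ FD.rel := act_rel hn α FD _ _ _
  have r1 : IsFinite FD.rel := FD.rel_finite hXft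
  have r2 : AlgebraicGeometry.Surjective FD.rel := FD.rel_surj
  have r3 : UniversallyInjective FD.rel := FD.rel_UI
  have hN : IsLocallyNoetherian FD.tw.carrier := (FD.tw_ft hXft).noeth
  obtain ⟨Q, φ, π, hf, hπ, D⟩ := exists_invData a pr FD.rel h
  rw [← hf] at r1 r2 r3
  have p1 : IsFinite π := D.finite_π
  have f1 : IsFinite φ := IsFinite.of_comp φ π
  have f2 : AlgebraicGeometry.Surjective φ := D.surj_φ
  have f3 : UniversallyInjective φ := UI_of_comp_left φ π
  have p2 : AlgebraicGeometry.Surjective π := .of_comp φ π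
  have p3 : UniversallyInjective π := UI_of_comp_right φ π
  have hinv : a ≫ φ = pr ≫ φ := D.invt
  have htw := FD.tw_ft hXft
  refine ⟨⟨Q, π ≫ FD.tw.str⟩, φ, π, ⟨?_, ?_, ?_⟩, ?_, ⟨f1, f2, f3⟩, hf, p1, p2, p3⟩
  · change φ ≫ π ≫ FD.tw.str = X.str
    rw [← Category.assoc, hf, FD.rel_str]
  · intro T g x hgx
    have l1 : pullback.lift g x hgx ≫ pullback.fst I.str X.str = g := pullback.lift_fst _ _ _
    have l2 : pullback.lift g x hgx ≫ pullback.snd I.str X.str = x := pullback.lift_snd _ _ _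
    have e1 := α.act_natural (pullback.lift g x hgx) (pullback.fst I.str X.str)
      (pullback.snd I.str X.str) pullback.condition (by rw [l1, l2, hgx])
    have e2 : α.act g x hgx = pullback.lift g x hgx ≫ a :=
      (α.act_congr l1.symm l2.symm _ _).trans e1.symm
    rw [e2, Category.assoc, hinv, ← Category.assoc]
    exact congr($l2 ≫ φ)
  · intro Z u hu hui
    exact D.desc u (hui _ _ _)
  · have := htw.1
    have := htw.2
    exact ⟨inferInstanceAs (LocallyOfFiniteType (π ≫ FD.tw.str)),
      inferInstanceAs (QuasiCompact (π ≫ FD.tw.str))⟩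


/-- Let `k` be a field of characteristic `p > 0`, `I` an infinitesimal
group scheme over `k`, and `X` a scheme of finite type over `k` with an `I`-action. Then
(i) there is a categorical quotient `φ : X ⟶ X/I` with `X/I` of finite type and `φ` finite,
surjective and radicial; and (ii) for `n ≥ h(I)`, the `n`-th relative Frobenius
`F^n_{X/k} : X ⟶ X^{(pⁿ)}` factors uniquely through `φ` via a morphism `ψ` which is also
finite, surjective and radicial. -/
theorem infinitesimal_quotient_exists_and_frobenius_factors
    {k : Type u} [Field k] (p : ℕ) [Fact p.Prime] [CharP k p]
    (I : GroupSchemeOver k) (hI : I.IsInfinitesimal)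
    (X : SchemeOver k) (hXft : X.IsFiniteType) (α : ActionOver I X) :
    (∃ (Q : SchemeOver k) (φ : X.carrier ⟶ Q.carrier),
      IsCatQuotient α Q φ ∧ Q.IsFiniteType ∧
      IsFinite φ ∧ AlgebraicGeometry.Surjective φ ∧ UniversallyInjective φ) ∧
    (∀ n : ℕ, 0 < n → FrobKillsAt k p I n →
      ∀ (Q : SchemeOver k) (φ : X.carrier ⟶ Q.carrier), IsCatQuotient α Q φ →
        ∀ FD : FrobeniusData k p n X,
          ∃ ψ : Q.carrier ⟶ FD.tw.carrier,
            φ ≫ ψ = FD.rel ∧ (∀ ψ' : Q.carrier ⟶ FD.tw.carrier, φ ≫ ψ' = FD.rel → ψ' = ψ) ∧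
            IsFinite ψ ∧ AlgebraicGeometry.Surjective ψ ∧ UniversallyInjective ψ) := by
  constructor
  · obtain ⟨n, -, hn⟩ := exists_frobKillsAt p I hI
    obtain ⟨Q, φ, π, h1, h2, h3, -⟩ :=
      quotient_main p I hI X hXft α n hn (frobData k p n X)
    exact ⟨Q, φ, h1, h2, h3⟩
  · intro n _ hn Q φ hQ FD
    obtain ⟨R, χ, π, hR, -, -, hχ, p1, p2, p3⟩ := quotient_main p I hI X hXft α n hn FD
    obtain ⟨e, he, -⟩ := hQ.2.2 R χ hR.1 hR.2.1
    obtain ⟨e', he', -⟩ := hR.2.2 Q φ hQ.1 hQ.2.1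
    have i1 : e ≫ e' = 𝟙 _ := (hQ.2.2 Q φ hQ.1 hQ.2.1).unique
      (by rw [← Category.assoc, he, he']) (Category.comp_id _)
    have i2 : e' ≫ e = 𝟙 _ := (hR.2.2 R χ hR.1 hR.2.1).unique
      (by rw [← Category.assoc, he', he]) (Category.comp_id _)
    have : IsIso e := ⟨e', i1, i2⟩
    have hψ : φ ≫ e ≫ π = FD.rel := by rw [← Category.assoc, he, hχ]
    refine ⟨e ≫ π, hψ, fun ψ' hψ' => ?_, inferInstance, inferInstance,
      MorphismProperty.comp_mem _ _ _ ?_ p3⟩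
    · exact (hQ.2.2 FD.tw FD.rel FD.rel_str (fun g x h => act_rel hn α FD g x h)).unique hψ' hψ
    · infer_instance
end
end

section
/- Let k be a field of characteristic p > 0, I an infinitesimal group scheme over k, and X a normal variety over k equipped with an I-action. Then the categorical quotient X/I is a normal variety over k. -/
open AlgebraicGeometry CategoryTheory CategoryTheory.Limits Opposite

universe u

noncomputable section

variable (k : Type u) [Field k]

variable {k}

namespace InfQuot

/-- The data of an infinitesimal groupoid-like pair of maps `a, s : P ⟶ X` with common section. -/
structure Setup (X P : Scheme.{u}) where
  a : P ⟶ X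
  s : P ⟶ X
  e : X ⟶ P
  ea : e ≫ a = 𝟙 X
  es : e ≫ s = 𝟙 X
  inj : Function.Injective s
  aff : IsAffineHom s
  flat : Flat s
  p : ℕ
  hp : p.Prime
  char : ∀ U : P.Opens, (p : Γ(P, U)) = 0

lemma sub_pow_of_char {R : Type*} [CommRing R] {p : ℕ} (hp : p.Prime) (h : (p : R) = 0)
    (x y : R) (n : ℕ) : (x - y) ^ p ^ n = x ^ p ^ n - y ^ p ^ n := by
  cases subsingleton_or_nontrivial R
  · exact Subsingleton.elim _ _
  · haveI := Fact.mk hp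
    haveI : CharP R p := (CharP.charP_iff_prime_eq_zero hp).mpr h
    exact sub_pow_char_pow x y n

section
variable {X P : Scheme.{u}} (S : Setup X P)
namespace Setup

lemma e_s (x : P) : S.e (S.s x) = x := by
  apply S.inj
  rw [← Scheme.Hom.comp_apply, S.es]; rfl

lemma a_eq_s (x : P) : S.a x = S.s x := by
  conv_lhs => rw [← S.e_s x]
  rw [← Scheme.Hom.comp_apply, S.ea]; rfl

lemma preimage_eq (U : X.Opens) : S.a ⁻¹ᵁ U = S.s ⁻¹ᵁ U := by
  ext x
  simp only [SetLike.mem_coe, Scheme.Hom.mem_preimage, S.a_eq_s]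

lemma e_preimage (U : X.Opens) : S.e ⁻¹ᵁ S.s ⁻¹ᵁ U = U := by
  rw [← Scheme.Hom.comp_preimage, S.es]; rfl

/-- invariant sections -/
def inv (U : X.Opens) : Subring Γ(X, U) :=
  RingHom.eqLocus (S.a.appLE U (S.s ⁻¹ᵁ U) (S.preimage_eq U).ge).hom (S.s.app U).hom

lemma mem_inv {U : X.Opens} (f : Γ(X, U)) :
    f ∈ S.inv U ↔ S.a.appLE U (S.s ⁻¹ᵁ U) (S.preimage_eq U).ge f = S.s.app U f := Iff.rfl

lemma e_appLE_zero {U : X.Opens} (f : Γ(X, U)) :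
    S.e.appLE (S.s ⁻¹ᵁ U) U (S.e_preimage U).ge
      (S.a.appLE U (S.s ⁻¹ᵁ U) (S.preimage_eq U).ge f - S.s.app U f) = 0 := by
  rw [map_sub, Scheme.Hom.app_eq_appLE, ← CommRingCat.comp_apply, ← CommRingCat.comp_apply,
    Scheme.Hom.appLE_comp_appLE, Scheme.Hom.appLE_comp_appLE]
  rw [sub_eq_zero]
  congr 2
  simp only [S.ea, S.es]

lemma nilp {U : X.Opens} (hU : IsAffineOpen U) (f : Γ(X, U)) :
    IsNilpotent (S.a.appLE U (S.s ⁻¹ᵁ U) (S.preimage_eq U).ge f - S.s.app U f) := by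
  have := S.aff
  rw [Scheme.isNilpotent_iff_basicOpen_eq_bot_of_isCompact
    ((hU.preimage S.s).isCompact)]
  set d := S.a.appLE U (S.s ⁻¹ᵁ U) (S.preimage_eq U).ge f - S.s.app U f with hd
  have h0 := S.e_appLE_zero f
  rw [← hd] at h0
  ext x
  simp only [SetLike.mem_coe, TopologicalSpace.Opens.coe_bot, Set.mem_empty_iff_false, iff_false]
  intro hx
  have h1 : S.s x ∈ U := P.basicOpen_le d hx
  have h2 : S.s x ∈ X.basicOpen (S.e.appLE (S.s ⁻¹ᵁ U) U (S.e_preimage U).ge d) := by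
    rw [Scheme.basicOpen_appLE]
    refine ⟨h1, ?_⟩
    change S.e (S.s x) ∈ P.basicOpen d
    rw [S.e_s]; exact hx
  rw [h0] at h2
  simp at h2

lemma exists_pow_mem {U : X.Opens} (hU : IsAffineOpen U) (f : Γ(X, U)) :
    ∃ n : ℕ, 0 < n ∧ f ^ n ∈ S.inv U := by
  obtain ⟨n, hn⟩ := S.nilp hU f
  refine ⟨S.p ^ n, pow_pos S.hp.pos _, ?_⟩
  rw [mem_inv, map_pow, map_pow, ← sub_eq_zero, ← sub_pow_of_char S.hp (S.char _)]
  exact pow_eq_zero_of_le (Nat.lt_pow_self S.hp.one_lt).le hn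

lemma res_mem {U V : X.Opens} (h : U ≤ V) (f : Γ(X, V)) (hf : f ∈ S.inv V) :
    X.presheaf.map (homOfLE h).op f ∈ S.inv U := by
  rw [mem_inv] at hf ⊢
  have := congr(P.presheaf.map (homOfLE (S.s.preimage_mono h)).op $hf)
  rw [Scheme.Hom.app_eq_appLE, ← CommRingCat.comp_apply, ← CommRingCat.comp_apply,
    Scheme.Hom.appLE_map, Scheme.Hom.appLE_map] at this
  rw [Scheme.Hom.app_eq_appLE, ← CommRingCat.comp_apply, ← CommRingCat.comp_apply,
    Scheme.Hom.map_appLE, Scheme.Hom.map_appLE]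
  exact this

/-- presheaf of invariants -/
def pre : X.Opensᵒᵖ ⥤ CommRingCat.{u} where
  obj U := .of (S.inv U.unop)
  map {V U} i := CommRingCat.ofHom ((X.presheaf.map i).hom.restrict _ _ fun x hx ↦
    S.res_mem i.unop.le x hx)
  map_id U := by
    ext x
    exact congr($(X.presheaf.map_id U) (x : S.inv U.unop).1)
  map_comp i j := by
    ext x
    exact congr($(X.presheaf.map_comp i j) (x : S.inv _).1)

/-- the inclusion of invariants -/
def incl : S.pre ⟶ X.presheaf where
  app U := CommRingCat.ofHom (S.inv U.unop).subtype
  naturality _ _ _ := by ext; rfl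


lemma appLE_res {Y Z : Scheme.{u}} (g : Y ⟶ Z) {U U' : Z.Opens} {V W W' : Y.Opens}
    (hU : U' ≤ U) (hV : V ≤ g ⁻¹ᵁ U) (hW' : W' ≤ g ⁻¹ᵁ U') (h1 : W ≤ W') (h2 : W ≤ V)
    (f : Γ(Z, U)) :
    Y.presheaf.map (homOfLE h1).op (g.appLE U' W' hW' (Z.presheaf.map (homOfLE hU).op f)) =
      Y.presheaf.map (homOfLE h2).op (g.appLE U V hV f) := by
  rw [← CommRingCat.comp_apply, ← CommRingCat.comp_apply, ← CommRingCat.comp_apply,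
    Scheme.Hom.appLE_map, Scheme.Hom.appLE_map, Scheme.Hom.map_appLE]

lemma mem_inv_of_mul {U : X.Opens} (hU : IsAffineOpen U) (b : S.inv U) (f : Γ(X, U))
    (hf : X.presheaf.map (homOfLE (X.basicOpen_le b.1)).op f ∈ S.inv (X.basicOpen b.1)) :
    ∃ n : ℕ, b.1 ^ n * f ∈ S.inv U := by
  have := S.aff
  have hV := hU.preimage S.s
  have h0 := (S.mem_inv _).mp b.2
  have hb : P.basicOpen (S.s.app U b.1) = S.s ⁻¹ᵁ X.basicOpen b.1 :=
    (Scheme.preimage_basicOpen _ _).symm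
  have loc := hV.isLocalization_basicOpen (S.s.app U b.1)
  rw [mem_inv] at hf
  have key : P.presheaf.map (homOfLE (P.basicOpen_le (S.s.app U b.1))).op
      (S.a.appLE U (S.s ⁻¹ᵁ U) (S.preimage_eq U).ge f) =
    P.presheaf.map (homOfLE (P.basicOpen_le (S.s.app U b.1))).op (S.s.app U f) := by
    have := congr(P.presheaf.map (homOfLE hb.le).op $hf)
    rw [appLE_res (V := S.s ⁻¹ᵁ U) S.a _ (S.preimage_eq U).ge _ _ (P.basicOpen_le _)] at this
    refine this.trans ?_
    have := appLE_res S.s (X.basicOpen_le b.1) le_rfl le_rfl hb.le (P.basicOpen_le _) f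
    rwa [← Scheme.Hom.app_eq_appLE, ← Scheme.Hom.app_eq_appLE] at this
  obtain ⟨⟨_, n, rfl⟩, hc⟩ :=
    (IsLocalization.eq_iff_exists (.powers (S.s.app U b.1)) _).mp key
  refine ⟨n, ?_⟩
  rw [mem_inv, map_mul, map_mul, map_pow, map_pow, h0]
  exact hc

lemma isLocalization {U : X.Opens} (hU : IsAffineOpen U) (b : S.inv U) :
    letI := (S.pre.map (homOfLE (X.basicOpen_le b.1)).op).hom.toAlgebra
    IsLocalization.Away (R := S.pre.obj (op U)) b (S.pre.obj (op (X.basicOpen b.1))) := by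
  have := S.aff
  let r := X.presheaf.map (homOfLE (X.basicOpen_le b.1)).op
  letI alg1 : Algebra Γ(X, U) Γ(X, X.basicOpen b.1) := r.hom.toAlgebra
  have loc1 : IsLocalization.Away b.1 Γ(X, X.basicOpen b.1) := hU.isLocalization_basicOpen _
  letI : Algebra (S.pre.obj (op U)) (S.pre.obj (op (X.basicOpen b.1))) :=
    (S.pre.map (homOfLE (X.basicOpen_le b.1)).op).hom.toAlgebra
  have hval (x : S.inv U) : (algebraMap (S.pre.obj (op U)) (S.pre.obj (op (X.basicOpen b.1))) x).1
      = algebraMap Γ(X, U) Γ(X, X.basicOpen b.1) x.1 := rfl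
  let bR : S.pre.obj (op U) := b
  have hu : IsUnit (algebraMap (S.pre.obj (op U)) (S.pre.obj (op (X.basicOpen b.1))) bR) := by
    have h1 := IsLocalization.Away.algebraMap_isUnit (S := Γ(X, X.basicOpen b.1)) b.1
    obtain ⟨⟨u, v, huv, hvu⟩, hu⟩ := h1
    have hu' : u = X.presheaf.map (homOfLE (X.basicOpen_le b.1)).op b.1 := hu
    have hum : u ∈ S.inv (X.basicOpen b.1) := hu' ▸ S.res_mem _ _ b.2
    have hvm : v ∈ S.inv (X.basicOpen b.1) := by
      rw [mem_inv] at hum ⊢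
      have hL := congr(S.a.appLE (X.basicOpen b.1) (S.s ⁻¹ᵁ (X.basicOpen b.1))
        (S.preimage_eq _).ge $huv)
      have hR := congr(S.s.app (X.basicOpen b.1) $hvu)
      rw [map_mul, map_one] at hL hR
      rw [hum] at hL
      exact (left_inv_eq_right_inv hR hL).symm
    refine isUnit_iff_exists.mpr ⟨(⟨v, hvm⟩ : S.inv _), Subtype.ext ?_, Subtype.ext ?_⟩
    · exact (congr($hu.symm * v)).trans huv
    · exact (congr(v * $hu.symm)).trans hvu
  have hpow : ∀ (x : S.inv (X.basicOpen b.1)) (n : ℕ) (y : S.inv U),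
      x.1 * algebraMap Γ(X, U) Γ(X, X.basicOpen b.1) (b.1 ^ n) =
        algebraMap Γ(X, U) Γ(X, X.basicOpen b.1) y.1 →
      (show S.pre.obj (op (X.basicOpen b.1)) from x) *
        algebraMap (S.pre.obj (op U)) (S.pre.obj (op (X.basicOpen b.1))) bR ^ n =
      algebraMap (S.pre.obj (op U)) (S.pre.obj (op (X.basicOpen b.1))) (y : S.pre.obj (op U)) := by
    intro x n y h
    refine Subtype.ext ?_
    rw [hval, ← h, map_pow]
    rfl
  refine IsLocalization.Away.mk (R := S.pre.obj (op U)) bR hu ?_ ?_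
  · intro x
    obtain ⟨n, f, hf⟩ := IsLocalization.Away.surj b.1 (show S.inv (X.basicOpen b.1) from x).1
    have hfm : X.presheaf.map (homOfLE (X.basicOpen_le b.1)).op f ∈ S.inv (X.basicOpen b.1) := by
      change algebraMap Γ(X, U) Γ(X, X.basicOpen b.1) f ∈ _
      rw [← hf]
      exact Subring.mul_mem _ x.2 (Subring.pow_mem _ (S.res_mem _ _ b.2) _)
    obtain ⟨m, hm⟩ := S.mem_inv_of_mul hU b f hfm
    refine ⟨m + n, (⟨_, hm⟩ : S.inv U), hpow x (m + n) ⟨_, hm⟩ ?_⟩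
    rw [map_mul, ← hf, pow_add, map_mul, map_pow, map_pow]
    ring
  · intro x y hxy
    have h1 : algebraMap Γ(X, U) Γ(X, X.basicOpen b.1) (show S.inv U from x).1 =
      algebraMap Γ(X, U) Γ(X, X.basicOpen b.1) (show S.inv U from y).1 := congr_arg Subtype.val hxy
    obtain ⟨n, hn⟩ := IsLocalization.Away.exists_of_eq b.1 h1
    exact ⟨n, Subtype.ext hn⟩
end Setup
end
end InfQuot

namespace InfQuot
section
variable {X P : Scheme.{u}} (S : Setup X P)
namespace Setup

lemma isIntegral_inv {U : X.Opens} (hU : IsAffineOpen U) :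
    Algebra.IsIntegral (S.inv U) Γ(X, U) := by
  refine ⟨fun f ↦ ?_⟩
  obtain ⟨n, hn, hf⟩ := S.exists_pow_mem hU f
  exact IsIntegral.of_pow hn (isIntegral_algebraMap (R := S.inv U) (x := ⟨_, hf⟩))

/-- The affine open inclusion -/
def fs (U : X.AffineZariskiSite) : Spec Γ(X, U.toOpens) ⟶ X :=
  IsAffineOpen.fromSpec (U := U.toOpens) U.2

instance (U : X.AffineZariskiSite) : IsOpenImmersion (fs U) :=
  inferInstanceAs (IsOpenImmersion (IsAffineOpen.fromSpec (U := U.toOpens) U.2))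

lemma range_fs (U : X.AffineZariskiSite) : Set.range (fs U) = U.toOpens :=
  IsAffineOpen.range_fromSpec (U := U.toOpens) U.2

/-- restriction map of spectra -/
def G {U V : X.AffineZariskiSite} (f : U ⟶ V) : Spec Γ(X, U.toOpens) ⟶ Spec Γ(X, V.toOpens) :=
  Spec.map (X.presheaf.map (homOfLE (Scheme.AffineZariskiSite.toOpens_mono f.le)).op)

lemma G_fs {U V : X.AffineZariskiSite} (f : U ⟶ V) :
    G f ≫ fs V = fs U :=
  IsAffineOpen.map_fromSpec (V := U.toOpens) (U := V.toOpens) V.2 U.2 _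

lemma G_fs_apply {U V : X.AffineZariskiSite} (f : U ⟶ V) (x) :
    fs V (G f x) = fs U x := by
  rw [← Scheme.Hom.comp_apply, G_fs]

lemma isOpenImmersion_of_loc {R R' : CommRingCat.{u}} (φ : R ⟶ R') (r : R)
    (h : letI := φ.hom.toAlgebra; IsLocalization.Away r R') : IsOpenImmersion (Spec.map φ) := by
  algebraize [φ.hom]
  exact IsOpenImmersion.of_isLocalization r

/-- The functor of affine pieces of the quotient. -/
def F : X.AffineZariskiSite ⥤ Scheme.{u} where
  obj U := Spec (S.pre.obj (op U.toOpens))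
  map f := Spec.map (S.pre.map (homOfLE (Scheme.AffineZariskiSite.toOpens_mono f.le)).op)
  map_id U := by
    rw [← Spec.map_id, ← S.pre.map_id]; rfl
  map_comp f g := by
    rw [← Spec.map_comp, ← S.pre.map_comp]; rfl

/-- Quotient map on affine pieces. -/
def q (U : X.AffineZariskiSite) : Spec Γ(X, U.toOpens) ⟶ S.F.obj U :=
  Spec.map (S.incl.app (op U.toOpens))

lemma q_nat {U V : X.AffineZariskiSite} (f : U ⟶ V) :
    G f ≫ S.q V =
      S.q U ≫ S.F.map f := by
  change Spec.map _ ≫ Spec.map _ = Spec.map _ ≫ Spec.map _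
  rw [← Spec.map_comp, ← Spec.map_comp, S.incl.naturality]

lemma q_nat_assoc {U V : X.AffineZariskiSite} (f : U ⟶ V) {Z : Scheme.{u}} (h : S.F.obj V ⟶ Z) :
    G f ≫ S.q V ≫ h = S.q U ≫ S.F.map f ≫ h := by
  rw [← Category.assoc, S.q_nat f, Category.assoc]

lemma q_nat_apply {U V : X.AffineZariskiSite} (f : U ⟶ V) (x) :
    S.F.map f (S.q U x) = S.q V (G f x) := by
  rw [← Scheme.Hom.comp_apply, ← q_nat, Scheme.Hom.comp_apply]

lemma q_integral (U : X.AffineZariskiSite) : IsIntegralHom (S.q U) := by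
  have := S.isIntegral_inv (U := U.toOpens) U.2
  exact IsIntegralHom.SpecMap_iff.mpr (algebraMap_isIntegral_iff.mpr this)

lemma q_injective (U : X.AffineZariskiSite) : Function.Injective (S.q U) := by
  have key : ∀ x y : PrimeSpectrum Γ(X, U.toOpens),
    PrimeSpectrum.comap (S.inv U.toOpens).subtype x = PrimeSpectrum.comap (S.inv U.toOpens).subtype y →
      x.asIdeal ≤ y.asIdeal := by
    intro x y h f hf
    obtain ⟨n, hn, hfn⟩ := S.exists_pow_mem (U := U.toOpens) U.2 f
    have h1 : (⟨_, hfn⟩ : S.inv U.toOpens) ∈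
      (PrimeSpectrum.comap (S.inv U.toOpens).subtype x).asIdeal := Ideal.pow_mem_of_mem _ hf _ hn
    rw [h] at h1
    exact y.2.mem_of_pow_mem _ h1
  intro x y h
  exact PrimeSpectrum.ext ((key x y h).antisymm (key y x h.symm))

lemma q_surjective (U : X.AffineZariskiSite) : Function.Surjective (S.q U) := by
  have h1 := S.isIntegral_inv (U := U.toOpens) U.2
  have : Function.Surjective (PrimeSpectrum.comap (algebraMap (S.inv U.toOpens) Γ(X, U.toOpens))) :=
    (algebraMap_isIntegral_iff.mpr h1).comap_surjective Subtype.val_injective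
  exact this

lemma exists_basicOpen_eq {U : X.Opens} (hU : IsAffineOpen U) (f : Γ(X, U)) :
    ∃ b : S.inv U, X.basicOpen b.1 = X.basicOpen f := by
  obtain ⟨n, hn, hf⟩ := S.exists_pow_mem hU f
  exact ⟨⟨_, hf⟩, X.basicOpen_pow _ hn⟩

lemma open_aux {U V : X.Opens} (hV : IsAffineOpen V) (b : S.inv V) (h : U ≤ V)
    (e : X.basicOpen b.1 = U) : IsOpenImmersion (Spec.map (S.pre.map (homOfLE h).op)) := by
  subst e
  exact isOpenImmersion_of_loc _ _ (S.isLocalization hV b)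

instance {U V : X.AffineZariskiSite} (f : U ⟶ V) : IsOpenImmersion (S.F.map f) := by
  obtain ⟨g, hg⟩ := f.le
  obtain ⟨b, hb⟩ := S.exists_basicOpen_eq (U := V.toOpens) V.2 g
  exact S.open_aux (V := V.toOpens) V.2 b _ (hb.trans hg)

lemma exists_le_le {U V : X.AffineZariskiSite} {x : X} (h1 : x ∈ U.toOpens) (h2 : x ∈ V.toOpens) :
    ∃ W : X.AffineZariskiSite, Nonempty (W ⟶ U) ∧ Nonempty (W ⟶ V) ∧ x ∈ W.toOpens := by
  obtain ⟨f, g, e, hxf⟩ := exists_basicOpen_le_affine_inter U.2 V.2 x ⟨h1, h2⟩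
  exact ⟨U.basicOpen f, ⟨homOfLE (U.basicOpen_le f)⟩, ⟨homOfLE ⟨g, e.symm⟩⟩, hxf⟩

instance : (S.F ⋙ Scheme.forget).IsLocallyDirected where
  cond {U V W} fi fj xi xj h := by
    replace h : S.F.map fi xi = S.F.map fj xj := h
    obtain ⟨yi, rfl⟩ := S.q_surjective U xi
    obtain ⟨yj, rfl⟩ := S.q_surjective V xj
    rw [q_nat_apply, q_nat_apply] at h
    have h' := congr((fs W) $(S.q_injective _ h))
    rw [G_fs_apply, G_fs_apply] at h'
    have hm1 : (fs U) yi ∈ U.toOpens := (range_fs U).le ⟨_, rfl⟩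
    have hm2 : (fs U) yi ∈ V.toOpens := h' ▸ (range_fs V).le ⟨_, rfl⟩
    obtain ⟨T, ⟨f1⟩, ⟨f2⟩, hT⟩ := exists_le_le hm1 hm2
    obtain ⟨t, ht⟩ := (range_fs T).ge hT
    refine ⟨T, f1, f2, S.q T t, ?_, ?_⟩
    · change S.F.map f1 (S.q T t) = S.q U yi
      rw [q_nat_apply]
      congr 1
      apply (fs U).isOpenEmbedding.injective
      rw [G_fs_apply, ht]
    · change S.F.map f2 (S.q T t) = S.q V yj
      rw [q_nat_apply]
      congr 1
      apply (fs V).isOpenEmbedding.injective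
      rw [G_fs_apply, ht, h']

instance : Quiver.IsThin X.AffineZariskiSite := fun _ _ ↦ ⟨fun _ _ ↦ Subsingleton.elim _ _⟩
instance : Small.{u} X.AffineZariskiSite := inferInstanceAs (Small.{u} { U : X.Opens // IsAffineOpen U })

/-- The quotient. -/
def Y : Scheme.{u} := colimit S.F

/-- affine charts -/
def ι (U : X.AffineZariskiSite) : S.F.obj U ⟶ S.Y := colimit.ι S.F U

instance (U : X.AffineZariskiSite) : IsOpenImmersion (S.ι U) :=
  inferInstanceAs (IsOpenImmersion (colimit.ι S.F U))

lemma F_map_ι {U V : X.AffineZariskiSite} (f : U ⟶ V) : S.F.map f ≫ S.ι V = S.ι U :=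
  colimit.w S.F f

/-- auxiliary cocone -/
def coconeY : Cocone (Scheme.AffineZariskiSite.toOpensFunctor X ⋙ X.presheaf.rightOp ⋙ Scheme.Spec) where
  pt := S.Y
  ι := { app := fun U ↦ S.q U ≫ S.ι U
         naturality := fun U V f ↦ by
          refine (S.q_nat_assoc f _).trans ?_
          rw [F_map_ι]
          exact (Category.comp_id _).symm }

/-- quotient map -/
def π : X ⟶ S.Y := (Scheme.AffineZariskiSite.isColimitCocone X).desc S.coconeY

lemma fromSpec_π (U : X.AffineZariskiSite) : (fs U) ≫ S.π = S.q U ≫ S.ι U :=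
  (Scheme.AffineZariskiSite.isColimitCocone X).fac S.coconeY U

lemma fromSpec_π_assoc (U : X.AffineZariskiSite) {Z : Scheme.{u}} (h : S.Y ⟶ Z) :
    (fs U) ≫ S.π ≫ h = S.q U ≫ S.ι U ≫ h := by
  rw [← Category.assoc, S.fromSpec_π U, Category.assoc]

lemma ι_jointly_surjective (y : S.Y) : ∃ U, ∃ z, S.ι U z = y :=
  Scheme.IsLocallyDirected.ι_jointly_surjective S.F y

lemma exists_affine (x : X) : ∃ (U : X.AffineZariskiSite) (z : Spec Γ(X, U.toOpens)), (fs U) z = x := by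
  obtain ⟨U, hU, hx, -⟩ := exists_isAffineOpen_mem_and_subset (x := x) (U := ⊤) trivial
  obtain ⟨t, ht⟩ := hU.range_fromSpec.ge hx
  exact ⟨⟨U, hU⟩, t, ht⟩

lemma π_surjective : Function.Surjective S.π := by
  intro y
  obtain ⟨U, z, rfl⟩ := S.ι_jointly_surjective y
  obtain ⟨t, rfl⟩ := S.q_surjective U z
  exact ⟨(fs U) t, by rw [← Scheme.Hom.comp_apply, fromSpec_π, Scheme.Hom.comp_apply]⟩

lemma π_injective : Function.Injective S.π := by
  intro x y h
  obtain ⟨U, z, rfl⟩ := exists_affine x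
  obtain ⟨V, w, rfl⟩ := exists_affine y
  rw [← Scheme.Hom.comp_apply, fromSpec_π, ← Scheme.Hom.comp_apply, fromSpec_π] at h
  obtain ⟨W, fi, fj, t, h1, h2⟩ := (Scheme.IsLocallyDirected.ι_eq_ι_iff S.F).mp h
  obtain ⟨t, rfl⟩ := S.q_surjective W t
  rw [q_nat_apply] at h1 h2
  rw [← S.q_injective _ h1, ← S.q_injective _ h2, G_fs_apply, G_fs_apply]

lemma π_mem_iff (U : X.AffineZariskiSite) (x : X) : S.π x ∈ Set.range (S.ι U) ↔ x ∈ U.toOpens := by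
  constructor
  · rintro ⟨z, hz⟩
    obtain ⟨t, rfl⟩ := S.q_surjective U z
    rw [← Scheme.Hom.comp_apply, ← fromSpec_π, Scheme.Hom.comp_apply] at hz
    rw [← S.π_injective hz]
    exact (range_fs U).le ⟨_, rfl⟩
  · intro hx
    obtain ⟨t, rfl⟩ := (range_fs U).ge hx
    rw [← Scheme.Hom.comp_apply, fromSpec_π]
    exact ⟨_, rfl⟩

end Setup
end
end InfQuot

namespace InfQuot

lemma app_injective {X Y : Scheme.{u}} (f : X ⟶ Y) (hf : Function.Surjective f) [IsReduced Y]
    (U : Y.Opens) : Function.Injective (f.app U) := by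
  rw [injective_iff_map_eq_zero]
  intro s hs
  apply eq_zero_of_basicOpen_eq_bot
  have h1 : f ⁻¹ᵁ Y.basicOpen s = ⊥ := by
    rw [Scheme.preimage_basicOpen, hs, Scheme.basicOpen_zero]
  ext y
  simp only [SetLike.mem_coe, TopologicalSpace.Opens.coe_bot, Set.mem_empty_iff_false, iff_false]
  intro hy
  obtain ⟨x, rfl⟩ := hf y
  have : x ∈ f ⁻¹ᵁ Y.basicOpen s := hy
  rw [h1] at this
  exact this

lemma epi_of_surjective {X Y : Scheme.{u}} (f : X ⟶ Y) (hf : Function.Surjective f) [IsReduced Y] :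
    Epi f := by
  refine ⟨fun {Z} v w h ↦ ?_⟩
  have hb : v.base = w.base := by
    ext y
    obtain ⟨x, rfl⟩ := hf y
    rw [← Scheme.Hom.comp_apply, ← Scheme.Hom.comp_apply, h]
  refine Scheme.Hom.ext hb fun U ↦ ?_
  have hle : w ⁻¹ᵁ U ≤ v ⁻¹ᵁ U := by
    intro y hy
    change v.base y ∈ U
    rw [hb]; exact hy
  have e1 : v.app U ≫ Y.presheaf.map (eqToHom congr((TopologicalSpace.Opens.map $hb.symm).obj U)).op
    = v.appLE U (w ⁻¹ᵁ U) hle := rfl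
  rw [e1]
  ext t
  apply app_injective f hf
  rw [← CommRingCat.comp_apply, ← CommRingCat.comp_apply]
  congr 2
  rw [Scheme.Hom.app_eq_appLE, Scheme.Hom.app_eq_appLE, Scheme.Hom.appLE_comp_appLE,
    Scheme.Hom.appLE_comp_appLE]
  simp only [h]

section
variable {X P : Scheme.{u}} (S : Setup X P)
namespace Setup

/-- cover of the quotient -/
def cov : S.Y.OpenCover :=
  Scheme.IsLocallyDirected.openCover S.F

lemma isReduced [IsReduced X] : IsReduced S.Y := by
  have : ∀ i, IsReduced (S.cov.X i) := fun U ↦ by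
    have : _root_.IsReduced (S.inv (Scheme.AffineZariskiSite.toOpens U)) :=
      isReduced_of_injective (Subring.subtype _) Subtype.val_injective
    exact (inferInstance : IsReduced (Spec (.of (S.inv (Scheme.AffineZariskiSite.toOpens U)))))
  exact IsReduced.of_openCover _ S.cov

lemma isPullback (U : X.AffineZariskiSite) : IsPullback (S.q U) (fs U) (S.ι U) S.π := by
  refine IsOpenImmersion.isPullback _ _ _ _ (S.fromSpec_π U) ?_
  ext x
  exact (S.π_mem_iff U x).trans (by rw [← SetLike.mem_coe, ← range_fs]; rfl)

lemma isIntegralHom_π : IsIntegralHom S.π := by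
  have : IsZariskiLocalAtTarget @IsIntegralHom.{u} :=
    (HasAffineProperty.iff.mp IsIntegralHom.hasAffineProperty).1
  have : MorphismProperty.RespectsIso @IsIntegralHom.{u} := this.toRespects
  refine (IsZariskiLocalAtTarget.iff_of_openCover (P := @IsIntegralHom) S.cov).mpr fun U ↦ ?_
  have h := S.isPullback U
  have h2 := S.q_integral U
  exact (MorphismProperty.arrow_mk_iso_iff @IsIntegralHom
    (Arrow.isoMk (f := Arrow.mk (S.q U)) (g := Arrow.mk (pullback.snd S.π (S.ι U)))
      (h.flip.isoPullback) (Iso.refl _) (by simp))).mp h2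

lemma irreducible [IrreducibleSpace X] : IrreducibleSpace S.Y := by
  have h : (⊤ : Set S.Y) = S.π '' Set.univ := by
    rw [Set.image_univ, S.π_surjective.range_eq]; rfl
  have h2 : IsPreirreducible (⊤ : Set S.Y) := by
    rw [h]
    exact (PreirreducibleSpace.isPreirreducible_univ (X := X)).image _ S.π.continuous.continuousOn
  exact { isPreirreducible_univ := h2, toNonempty := ⟨S.π (Classical.arbitrary X)⟩ }

lemma isIntegral [IsIntegral X] : IsIntegral S.Y := by
  have := S.isReduced
  have := S.irreducible
  exact isIntegral_of_irreducibleSpace_of_isReduced _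

lemma exists_chart {Z : Scheme.{u}} (u : X ⟶ Z) (hu : S.a ≫ u = S.s ≫ u)
    (U : X.AffineZariskiSite) {T : Z.Opens} (hT : IsAffineOpen T) (h : U.toOpens ≤ u ⁻¹ᵁ T) :
    ∃ v : S.F.obj U ⟶ Z, S.q U ≫ v = fs U ≫ u := by
  have hmem : ∀ t : Γ(Z, T), u.appLE T U.toOpens h t ∈ S.inv U.toOpens := by
    intro t
    rw [mem_inv, Scheme.Hom.app_eq_appLE, ← CommRingCat.comp_apply, ← CommRingCat.comp_apply,
      Scheme.Hom.appLE_comp_appLE, Scheme.Hom.appLE_comp_appLE]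
    simp only [hu]
  let φ : Γ(Z, T) ⟶ S.pre.obj (op U.toOpens) :=
    CommRingCat.ofHom ((u.appLE T U.toOpens h).hom.codRestrict _ hmem)
  have hφ : φ ≫ S.incl.app (op U.toOpens) = u.appLE T U.toOpens h := rfl
  refine ⟨Spec.map φ ≫ hT.fromSpec, ?_⟩
  change Spec.map (S.incl.app (op U.toOpens)) ≫ Spec.map φ ≫ hT.fromSpec = _
  rw [← Spec.map_comp_assoc, hφ]
  exact IsAffineOpen.SpecMap_appLE_fromSpec u hT (V := U.toOpens) U.2 h

lemma π_invariant : S.a ≫ S.π = S.s ≫ S.π := by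
  have := S.aff
  let 𝒱 : P.OpenCover :=
    { I₀ := X.AffineZariskiSite
      X := fun U ↦ Spec Γ(P, S.s ⁻¹ᵁ U.toOpens)
      f := fun U ↦ IsAffineOpen.fromSpec (U := S.s ⁻¹ᵁ U.toOpens)
        (IsAffineOpen.preimage (U := U.toOpens) U.2 S.s)
      mem₀ := by
        rw [Scheme.presieve₀_mem_precoverage_iff]
        refine ⟨fun x ↦ ?_, fun U ↦ IsAffineOpen.isOpenImmersion_fromSpec _⟩
        obtain ⟨U, z, hz⟩ := exists_affine (S.s x)
        refine ⟨U, (IsAffineOpen.range_fromSpec _).ge ?_⟩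
        change S.s x ∈ U.toOpens
        rw [← hz]
        exact (range_fs U).le ⟨_, rfl⟩ }
  refine 𝒱.hom_ext _ _ fun U ↦ ?_
  have hU : IsAffineOpen U.toOpens := U.2
  change (hU.preimage S.s).fromSpec ≫ _ = (hU.preimage S.s).fromSpec ≫ _
  rw [← IsAffineOpen.SpecMap_appLE_fromSpec_assoc S.a hU (hU.preimage S.s) (S.preimage_eq _).ge,
    ← IsAffineOpen.SpecMap_appLE_fromSpec_assoc S.s hU (hU.preimage S.s) le_rfl]
  change Spec.map _ ≫ fs U ≫ S.π = Spec.map _ ≫ fs U ≫ S.π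
  rw [fromSpec_π, ← Category.assoc, ← Category.assoc]
  congr 1
  change Spec.map _ ≫ Spec.map (S.incl.app (op U.toOpens)) =
    Spec.map _ ≫ Spec.map (S.incl.app (op U.toOpens))
  rw [← Spec.map_comp, ← Spec.map_comp]
  congr 1
  ext b
  have := (S.mem_inv _).mp (show S.inv U.toOpens from b).2
  rw [Scheme.Hom.app_eq_appLE] at this
  exact this

lemma exists_desc [IsReduced X] {Z : Scheme.{u}} (u : X ⟶ Z) (hu : S.a ≫ u = S.s ≫ u) :
    ∃ v : S.Y ⟶ Z, S.π ≫ v = u := by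
  have hred := S.isReduced
  let J := { U : X.AffineZariskiSite // ∃ T : Z.Opens, IsAffineOpen T ∧ U.toOpens ≤ u ⁻¹ᵁ T }
  have hJ : ∀ x : X, ∃ U : J, x ∈ U.1.toOpens := by
    intro x
    obtain ⟨T, hT, hx, -⟩ := exists_isAffineOpen_mem_and_subset (x := u x) (U := ⊤) trivial
    obtain ⟨U, hU, hxU, hle⟩ := exists_isAffineOpen_mem_and_subset (x := x) (U := u ⁻¹ᵁ T) hx
    exact ⟨⟨⟨U, hU⟩, T, hT, hle⟩, hxU⟩
  let 𝒰 : S.Y.OpenCover :=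
    { I₀ := J
      X := fun U ↦ S.F.obj U.1
      f := fun U ↦ S.ι U.1
      mem₀ := by
        rw [Scheme.presieve₀_mem_precoverage_iff]
        refine ⟨fun y ↦ ?_, fun U ↦ (inferInstance : IsOpenImmersion (S.ι U.1))⟩
        obtain ⟨x, rfl⟩ := S.π_surjective y
        obtain ⟨U, hU⟩ := hJ x
        exact ⟨U, (S.π_mem_iff U.1 x).mpr hU⟩ }
  choose v hv using fun U : J ↦ S.exists_chart u hu U.1 U.2.choose_spec.1 U.2.choose_spec.2
  have key : ∀ (U : J) {T : Scheme.{u}} (t : T ⟶ X) (t' : T ⟶ S.F.obj U.1)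
      (h : t ≫ S.π = t' ≫ S.ι U.1), t' ≫ v U = t ≫ u := by
    intro U T t t' h
    have H := S.isPullback U.1
    rw [← H.lift_fst t' t h.symm, Category.assoc, hv, ← Category.assoc, H.lift_snd]
  refine ⟨𝒰.glueMorphisms v fun U V ↦ ?_, ?_⟩
  · have : IsReduced (pullback (𝒰.f U) (𝒰.f V)) :=
      isReduced_of_isOpenImmersion (pullback.fst (𝒰.f U) (𝒰.f V) ≫ 𝒰.f U)
    have : Surjective S.π := ⟨S.π_surjective⟩
    have hepi := epi_of_surjective (pullback.snd S.π (pullback.fst (𝒰.f U) (𝒰.f V) ≫ 𝒰.f U))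
      (Scheme.Hom.surjective _)
    rw [← cancel_epi (pullback.snd S.π (pullback.fst (𝒰.f U) (𝒰.f V) ≫ 𝒰.f U))]
    rw [← Category.assoc, ← Category.assoc]
    refine (key U (pullback.fst _ _) _ ?_).trans (key V (pullback.fst _ _) _ ?_).symm
    · have h1 := pullback.condition (f := S.π) (g := pullback.fst (𝒰.f U) (𝒰.f V) ≫ 𝒰.f U)
      exact h1.trans (Category.assoc _ _ _).symm
    · have h1 := pullback.condition (f := S.π) (g := pullback.fst (𝒰.f U) (𝒰.f V) ≫ 𝒰.f U)
      have h2 := pullback.condition (f := 𝒰.f U) (g := 𝒰.f V)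
      refine h1.trans ?_
      rw [Category.assoc]
      exact congr(_ ≫ $h2)
  · let 𝒱 : X.OpenCover :=
      { I₀ := J
        X := fun U ↦ Spec Γ(X, U.1.toOpens)
        f := fun U ↦ fs U.1
        mem₀ := by
          rw [Scheme.presieve₀_mem_precoverage_iff]
          refine ⟨fun x ↦ ?_, fun U ↦ (inferInstance : IsOpenImmersion (fs U.1))⟩
          obtain ⟨U, hU⟩ := hJ x
          exact ⟨U, (range_fs U.1).ge hU⟩ }
    refine 𝒱.hom_ext _ _ fun U ↦ ?_
    change fs U.1 ≫ S.π ≫ _ = fs U.1 ≫ u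
    rw [fromSpec_π_assoc, ← hv]
    congr 1
    exact 𝒰.ι_glueMorphisms v _ U

end Setup
end
end InfQuot

namespace InfQuot

lemma finiteType_of_integral {K B A : Type u} [CommRing K] [CommRing B] [CommRing A]
    [IsNoetherianRing K] (φ : K →+* B) (ψ : B →+* A) (hψ : Function.Injective ψ)
    (hi : ψ.IsIntegral) (hf : (ψ.comp φ).FiniteType) : φ.FiniteType := by
  algebraize [φ, ψ, ψ.comp φ]
  have h1 : ψ.FiniteType := RingHom.FiniteType.of_comp_finiteType hf
  have h2 : ψ.Finite := hi.to_finite h1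
  have h3 : Module.Finite B A := h2
  exact ⟨fg_of_fg_of_fg K B A (Algebra.FiniteType.out (R := K) (A := A)) h3.1 hψ⟩

lemma isSeparated_of_surj {X Y Z : Scheme.{u}} (f : X ⟶ Y) (g : Y ⟶ Z) [IsIntegralHom f]
    [Surjective f] [AlgebraicGeometry.IsSeparated (f ≫ g)] : AlgebraicGeometry.IsSeparated g := by
  have hm : UniversallyClosed (pullback.map (f ≫ g) (f ≫ g) g g f f (𝟙 _)
      (Category.comp_id _) (Category.comp_id _)) :=
    MorphismProperty.pullbackMap (P := @UniversallyClosed) (f := f ≫ g) (g := f ≫ g)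
      (f' := g) (g' := g) (i₁ := f) (i₂ := f) inferInstance inferInstance rfl rfl
  have he : f ≫ pullback.diagonal g = pullback.diagonal (f ≫ g) ≫ 
      (pullback.map (f ≫ g) (f ≫ g) g g f f (𝟙 _)
      (Category.comp_id _) (Category.comp_id _)) := by
    apply pullback.hom_ext
    · rw [Category.assoc, Category.assoc, pullback.map, pullback.lift_fst, pullback.diagonal_fst,
        ← Category.assoc, pullback.diagonal_fst, Category.comp_id, Category.id_comp]
    · rw [Category.assoc, Category.assoc, pullback.map, pullback.lift_snd, pullback.diagonal_snd,
        ← Category.assoc, pullback.diagonal_snd, Category.comp_id, Category.id_comp]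
  have h1 : IsClosedImmersion (pullback.diagonal (f ≫ g)) :=
    IsSeparated.isClosedImmersion_diagonal
  have h2 : UniversallyClosed (f ≫ pullback.diagonal g) := by
    rw [he]; infer_instance
  have h3 : UniversallyClosed (pullback.diagonal g) := UniversallyClosed.of_comp_surjective f _
  exact ⟨.of_isPreimmersion _ (pullback.diagonal g).isClosedMap.isClosed_range⟩

section
variable {X P : Scheme.{u}} (S : Setup X P)
namespace Setup

lemma lft {K : CommRingCat.{u}} [IsNoetherianRing K] (g : S.Y ⟶ Spec K)
    (h : LocallyOfFiniteType (S.π ≫ g)) : LocallyOfFiniteType g := by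
  have : IsZariskiLocalAtSource @LocallyOfFiniteType.{u} :=
    HasRingHomProperty.instIsZariskiLocalAtSource (P := @LocallyOfFiniteType.{u})
  refine (IsZariskiLocalAtSource.iff_of_openCover (P := @LocallyOfFiniteType) S.cov).mpr
    (show ∀ U : X.AffineZariskiSite, LocallyOfFiniteType (S.ι U ≫ g) from fun U ↦ ?_)
  obtain ⟨φ, hφ⟩ : ∃ φ : K ⟶ S.pre.obj (op U.toOpens), Spec.map φ = S.ι U ≫ g :=
    Spec.map_surjective _
  have h1 : LocallyOfFiniteType (fs U ≫ S.π ≫ g) := inferInstance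
  rw [fromSpec_π_assoc, ← hφ] at h1
  change LocallyOfFiniteType (Spec.map (S.incl.app (op U.toOpens)) ≫ _) at h1
  rw [← Spec.map_comp, HasRingHomProperty.Spec_iff (P := @LocallyOfFiniteType)] at h1
  rw [← hφ]
  refine (HasRingHomProperty.Spec_iff (P := @LocallyOfFiniteType)).mpr ?_
  have h3 := S.isIntegral_inv (U := U.toOpens) U.2
  exact finiteType_of_integral φ.hom (S.inv U.toOpens).subtype Subtype.val_injective
    (algebraMap_isIntegral_iff.mpr h3) h1

lemma qc {K : CommRingCat.{u}} (g : S.Y ⟶ Spec K)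
    (h : QuasiCompact (S.π ≫ g)) : QuasiCompact g := by
  rw [quasiCompact_iff_compactSpace] at h ⊢
  exact S.π_surjective.compactSpace S.π.continuous

lemma sep {Z : Scheme.{u}} (g : S.Y ⟶ Z)
    (h : AlgebraicGeometry.IsSeparated (S.π ≫ g)) : AlgebraicGeometry.IsSeparated g := by
  have := S.isIntegralHom_π
  have : Surjective S.π := ⟨S.π_surjective⟩
  exact isSeparated_of_surj S.π g

end Setup
end
end InfQuot

namespace InfQuot

lemma isIntegrallyClosed_subring {A : Type u} [CommRing A] [IsDomain A] [IsIntegrallyClosed A]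
    (B : Subring A) (hB : ∀ (b : B) (a : A), b ≠ 0 → b.1 * a ∈ B → a ∈ B) :
    IsIntegrallyClosed B := by
  rw [isIntegrallyClosed_iff (FractionRing B)]
  intro x hx
  have hinj : Function.Injective (algebraMap B (FractionRing A)) := by
    rw [IsScalarTower.algebraMap_eq B A (FractionRing A)]
    exact (IsFractionRing.injective A (FractionRing A)).comp Subtype.val_injective
  let f : FractionRing B →ₐ[B] FractionRing A :=
    IsFractionRing.liftAlgHom (g := Algebra.ofId B (FractionRing A)) hinj
  have h1 : IsIntegral A (f x) := (hx.map f).tower_top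
  obtain ⟨a, ha⟩ := IsIntegrallyClosed.isIntegral_iff.mp h1
  obtain ⟨b1, b2, hb2, rfl⟩ := IsFractionRing.div_surjective (A := B) x
  have hb2' : b2 ≠ 0 := nonZeroDivisors.ne_zero hb2
  have h2 : algebraMap B (FractionRing B) b2 ≠ 0 := by
    simpa using hb2'
  have h3 : b2.1 * a = b1.1 := by
    apply IsFractionRing.injective A (FractionRing A)
    rw [map_mul, ha]
    have e1 (b : B) : algebraMap A (FractionRing A) b.1 = f (algebraMap B (FractionRing B) b) := by
      rw [f.commutes]; rfl
    rw [e1, e1, ← map_mul]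
    congr 1
    field_simp
  have hm : a ∈ B := hB b2 a hb2' (h3 ▸ b1.2)
  refine ⟨⟨a, hm⟩, ?_⟩
  rw [eq_div_iff h2, ← map_mul]
  congr 1
  exact Subtype.ext ((mul_comm _ _).trans h3)

lemma mul_eq_zero_of_flat {A R : Type u} [CommRing A] [IsDomain A] [CommRing R] (f : A →+* R)
    (hf : f.Flat) {b : A} (hb : b ≠ 0) {r : R} (h : f b * r = 0) : r = 0 := by
  algebraize [f]
  have : Module.IsTorsionFree A R := inferInstance
  have h2 : b • r = 0 := by rw [Algebra.smul_def]; exact h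
  exact (smul_eq_zero_iff_right hb).mp h2

lemma isIntegrallyClosed_localization {A C : Type u} [CommRing A] [CommRing C] (alg : Algebra A C)
    (p : Ideal A) [p.IsPrime] (h : IsLocalization.AtPrime C p) (hc : IsIntegrallyClosed C) :
    IsIntegrallyClosed (Localization.AtPrime p) :=
  IsIntegrallyClosed.of_equiv
    (IsLocalization.algEquiv p.primeCompl C (Localization.AtPrime p)).toRingEquiv

lemma isIntegrallyClosed_sections {X : Scheme.{u}} [IsIntegral X]
    (hX : ∀ x : X, IsIntegrallyClosed (X.presheaf.stalk x)) {U : X.Opens} (hU : IsAffineOpen U)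
    [Nonempty U] : IsIntegrallyClosed Γ(X, U) := by
  refine IsIntegrallyClosed.of_localization_maximal fun p _ hp ↦ ?_
  let y : PrimeSpectrum Γ(X, U) := ⟨p, inferInstance⟩
  have hy : hU.fromSpec y ∈ U := hU.range_fromSpec.le ⟨y, rfl⟩
  exact isIntegrallyClosed_localization
    (TopCat.Presheaf.algebra_section_stalk X.presheaf ⟨hU.fromSpec y, hy⟩) p
    (hU.isLocalization_stalk' y hy) (hX (hU.fromSpec y))

section
variable {X P : Scheme.{u}} (S : Setup X P)
namespace Setup

lemma mem_of_mul_mem [IsIntegral X] {U : X.Opens} (hU : IsAffineOpen U) [Nonempty U]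
    (b : S.inv U) (f : Γ(X, U)) (hb : b ≠ 0) (h : b.1 * f ∈ S.inv U) : f ∈ S.inv U := by
  have := S.aff
  have := S.flat
  have hfl := S.s.flat_appLE hU (hU.preimage S.s) le_rfl
  rw [← Scheme.Hom.app_eq_appLE] at hfl
  have hb' : b.1 ≠ 0 := fun h ↦ hb (Subtype.ext h)
  have h0 := (S.mem_inv _).mp b.2
  rw [mem_inv, map_mul, map_mul, h0, ← sub_eq_zero, ← mul_sub] at h
  rw [mem_inv, ← sub_eq_zero]
  exact mul_eq_zero_of_flat _ hfl hb' h

lemma normal [IsIntegral X] (hX : ∀ x : X, IsIntegrallyClosed (X.presheaf.stalk x)) (y : S.Y) :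
    IsIntegrallyClosed (S.Y.presheaf.stalk y) := by
  obtain ⟨U, z, rfl⟩ := S.ι_jointly_surjective y
  obtain ⟨t, ht⟩ := S.q_surjective U z
  have hU : IsAffineOpen U.toOpens := U.2
  have : Nonempty U.toOpens := ⟨⟨fs U t, (range_fs U).le ⟨_, rfl⟩⟩⟩
  have hA := isIntegrallyClosed_sections hX hU
  have hB : IsIntegrallyClosed (S.inv U.toOpens) :=
    isIntegrallyClosed_subring _ fun b a hb h ↦ S.mem_of_mul_mem hU b a hb h
  let x : PrimeSpectrum (S.inv U.toOpens) := z
  letI : Algebra (S.inv U.toOpens) ((Spec (.of (S.inv U.toOpens))).presheaf.stalk x) :=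
    StructureSheaf.stalkAlgebra (S.inv U.toOpens) x
  have : IsLocalization.AtPrime ((Spec (.of (S.inv U.toOpens))).presheaf.stalk x) x.asIdeal :=
    StructureSheaf.IsLocalization.to_stalk (S.inv U.toOpens) x
  have h1 : IsIntegrallyClosed ((Spec (.of (S.inv U.toOpens))).presheaf.stalk x) :=
    isIntegrallyClosed_of_isLocalization _ x.asIdeal.primeCompl
      x.asIdeal.primeCompl_le_nonZeroDivisors
  have h2 : IsIntegrallyClosed ((S.F.obj U).presheaf.stalk z) := h1
  exact IsIntegrallyClosed.of_equiv
    (asIso (Scheme.Hom.stalkMap (S.ι U) z)).commRingCatIsoToRingEquiv.symm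

end Setup
end
end InfQuot

namespace InfQuot

lemma flat_Spec_over_field {K : Type u} [Field K] {R : CommRingCat.{u}}
    (f : Spec R ⟶ Spec (.of K)) : Flat f := by
  obtain ⟨φ, rfl⟩ := Spec.map_surjective f
  refine (HasRingHomProperty.Spec_iff (P := @Flat)).mpr ?_
  algebraize [φ.hom]
  exact (inferInstance : Module.Flat K R)

lemma flat_over_field {K : Type u} [Field K] {Z : Scheme.{u}} (f : Z ⟶ Spec (.of K)) : Flat f := by
  have : IsZariskiLocalAtSource @Flat.{u} :=
    HasRingHomProperty.instIsZariskiLocalAtSource (P := @Flat.{u})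
  refine (IsZariskiLocalAtSource.iff_of_openCover (P := @Flat) Z.affineCover).mpr fun i ↦ ?_
  exact flat_Spec_over_field (Z.affineCover.f i ≫ f)

lemma char_of_over {K : Type u} [Field K] (p : ℕ) [CharP K p] {Z : Scheme.{u}}
    (f : Z ⟶ Spec (.of K)) (U : Z.Opens) : (p : Γ(Z, U)) = 0 := by
  have h : ((p : K)) = 0 := CharP.cast_eq_zero K p
  let g : CommRingCat.of K ⟶ Γ(Z, U) :=
    (Scheme.ΓSpecIso (.of K)).inv ≫ f.appLE ⊤ U le_top
  have := congr(g.hom $h)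
  rwa [map_natCast, map_zero] at this

/-- The setup attached to an action of an infinitesimal group scheme. -/
def mkSetup {k : Type u} [Field k] (p : ℕ) [Fact p.Prime] [CharP k p]
    (I : GroupSchemeOver k) (hI : I.IsInfinitesimal) (X : SchemeOver k) (α : ActionOver I X) :
    Setup X.carrier (pullback I.str X.str) where
  a := α.act (pullback.fst _ _) (pullback.snd _ _) pullback.condition
  s := pullback.snd _ _
  e := pullback.lift (X.str ≫ I.one) (𝟙 _) (by rw [Category.assoc, I.one_str]; simp)
  ea := by
    have h1 : (𝟙 X.carrier ≫ X.str ≫ I.one) ≫ I.str = 𝟙 X.carrier ≫ X.str := by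
      rw [Category.assoc, Category.assoc, I.one_str, Category.comp_id]
    refine (α.act_natural _ _ _ _ ?_).trans ((α.act_congr ?_ ?_ _ h1).trans (α.one_act (𝟙 _) h1))
    · exact (Category.assoc _ _ _).trans
        ((congrArg (_ ≫ ·) pullback.condition).trans (Category.assoc _ _ _).symm)
    · rw [pullback.lift_fst, Category.id_comp]
    · rw [pullback.lift_snd]
  es := pullback.lift_snd _ _ _
  inj := by
    have := hI.2.2
    have h : UniversallyInjective (pullback.snd I.str X.str) :=
      UniversallyInjective.isStableUnderBaseChange.of_isPullback
        (IsPullback.of_hasPullback I.str X.str) this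
    exact Scheme.Hom.injective _
  aff := by
    have := hI.2.1
    infer_instance
  flat := by
    have := flat_over_field I.str
    infer_instance
  p := p
  hp := Fact.out
  char := char_of_over p (pullback.snd I.str X.str ≫ X.str)

lemma invariant_iff {k : Type u} [Field k] (p : ℕ) [Fact p.Prime] [CharP k p]
    (I : GroupSchemeOver k) (hI : I.IsInfinitesimal) (X : SchemeOver k) (α : ActionOver I X)
    {Z : Scheme.{u}} (u : X.carrier ⟶ Z) :
    (∀ {T : Scheme.{u}} (g : T ⟶ I.carrier) (x : T ⟶ X.carrier) (h),
      α.act g x h ≫ u = x ≫ u) ↔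
    (mkSetup p I hI X α).a ≫ u = (mkSetup p I hI X α).s ≫ u := by
  constructor
  · intro h
    exact h _ _ _
  · intro H T g x h
    have h1 : pullback.lift g x h ≫ (mkSetup p I hI X α).a = α.act g x h := by
      refine (α.act_natural _ _ _ _ ?_).trans (α.act_congr ?_ ?_ _ _)
      · rw [Category.assoc, Category.assoc, pullback.condition]
      · rw [pullback.lift_fst]
      · rw [pullback.lift_snd]
    have h2 : pullback.lift g x h ≫ (mkSetup p I hI X α).s = x := pullback.lift_snd _ _ _
    rw [← h1, Category.assoc, H, ← Category.assoc, h2]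

end InfQuot

/-- Let `k` be a field of characteristic `p > 0`, `I` an infinitesimal
group scheme over `k`, and `X` a normal variety over `k` with an `I`-action. Then the
categorical quotient `X/I` is a normal variety over `k`. -/
theorem quotient_of_normal_variety_is_normal
    {k : Type u} [Field k] (p : ℕ) [Fact p.Prime] [CharP k p]
    (I : GroupSchemeOver k) (hI : I.IsInfinitesimal)
    (X : SchemeOver k) (hXvar : X.IsVariety) (hXnorm : IsNormalScheme X.carrier)
    (α : ActionOver I X) :
    ∀ (Q : SchemeOver k) (φ : X.carrier ⟶ Q.carrier), IsCatQuotient α Q φ →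
      Q.IsVariety ∧ IsNormalScheme Q.carrier := by
  intro Q φ hQ
  obtain ⟨hφ, hinv, huniv⟩ := hQ
  obtain ⟨hXint, hsep, hlft, hqc⟩ := hXvar
  let S := InfQuot.mkSetup p I hI X α
  obtain ⟨g, hg⟩ := S.exists_desc X.str (by
    rw [← InfQuot.invariant_iff]
    intro T g x h
    exact α.act_str g x h)
  obtain ⟨v, hv, -⟩ := huniv ⟨S.Y, g⟩ S.π hg
    ((InfQuot.invariant_iff p I hI X α S.π).mpr S.π_invariant)
  obtain ⟨w, hw⟩ := S.exists_desc φ ((InfQuot.invariant_iff p I hI X α φ).mp hinv)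
  have hYint := S.isIntegral
  have hepi := InfQuot.epi_of_surjective S.π S.π_surjective
  change φ ≫ v = S.π at hv
  have hwv : w ≫ v = 𝟙 S.Y := by
    rw [← cancel_epi S.π, ← Category.assoc, hw, hv, Category.comp_id]
  have hvw : v ≫ w = 𝟙 Q.carrier := by
    obtain ⟨t, -, ht⟩ := huniv Q φ hφ hinv
    refine (ht (v ≫ w) ?_).trans (ht (𝟙 _) ?_).symm
    · change φ ≫ v ≫ w = φ
      rw [← Category.assoc, hv, hw]
    · exact Category.comp_id _
  have hviso : IsIso v := ⟨w, hvw, hwv⟩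
  have hstr : v ≫ g = Q.str := by
    have h1 : w ≫ Q.str = g := by
      rw [← cancel_epi S.π, ← Category.assoc, hw, hφ, hg]
    rw [← h1, ← Category.assoc, hvw, Category.id_comp]
  have hg1 : LocallyOfFiniteType g := S.lft g (by rw [hg]; exact hlft)
  have hg2 : QuasiCompact g := S.qc g (by rw [hg]; exact hqc)
  have hg3 : AlgebraicGeometry.IsSeparated g := S.sep g (by rw [hg]; exact hsep)
  have hne : Nonempty Q.carrier := ⟨w (Classical.arbitrary S.Y)⟩
  have hQint : IsIntegral Q.carrier := isIntegral_of_isOpenImmersion v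
  refine ⟨⟨hQint, ?_, ?_, ?_⟩, fun x ↦ ⟨inferInstance, ?_⟩⟩
  · rw [← hstr]; infer_instance
  · rw [← hstr]; infer_instance
  · rw [← hstr]; infer_instance
  · have := S.normal (fun x ↦ (hXnorm x).2) (v x)
    exact IsIntegrallyClosed.of_equiv (asIso (Scheme.Hom.stalkMap v x)).commRingCatIsoToRingEquiv
end
end
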